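/- Let Γ ⊂ ℂ be a quasismooth Jordan curve. There exists α = α(Γ) ≥ 1 such that for every c > 0 there is a constant C > 0 depending only on Γ and c with the following property: for all finite points z₁, z₂, z₃ in the closure of Ω with z₁ ≠ z₂, t_j := Φ(z_j) (j = 1,2,3), if |z₁ − z₂| ≤ c |z₁ − z₃|, then (|t₁ − t₃|/|t₁ − t₂|)^{1/α} ≤ C |z₁ − z₃|/|z₁ − z₂| and |z₁ − z₃|/|z₁ − z₂| ≤ C (|t₁ − t₃|/|t₁ − t₂|)^{α}. -/

import Mathlib

open MeasureTheory Metric Set Filter Bornology Complex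
open scoped ENNReal NNReal Topology

noncomputable section

/-- `Γ` is a Jordan curve: the image of an injective continuous map of the unit circle. -/
def IsJordanCurve (Γ : Set ℂ) : Prop :=
  ∃ γ : ℂ → ℂ, ContinuousOn γ (Metric.sphere (0:ℂ) 1) ∧
    Set.InjOn γ (Metric.sphere (0:ℂ) 1) ∧ Γ = γ '' (Metric.sphere (0:ℂ) 1)

/-- A (closed) subarc of `Γ`: a closed connected subset. -/
def IsSubarc (Γ J : Set ℂ) : Prop :=
  J ⊆ Γ ∧ IsClosed J ∧ IsPreconnected J

/-- `|Γ(z₁,z₂)|`: the length (1-dimensional Hausdorff measure) of the shorter subarc of `Γ`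
joining `z₁` and `z₂`, described as the infimum of lengths of closed connected subsets of `Γ`
containing both points. -/
def shorterArcLength (Γ : Set ℂ) (z₁ z₂ : ℂ) : ℝ≥0∞ :=
  ⨅ (J : Set ℂ) (_ : IsSubarc Γ J ∧ z₁ ∈ J ∧ z₂ ∈ J), μH[1] J

/-- `J` is (a realization of) the shorter arc `Γ(z₁,z₂)` of `Γ` between `z₁` and `z₂`. -/
def IsShorterArc (Γ : Set ℂ) (z₁ z₂ : ℂ) (J : Set ℂ) : Prop :=
  IsSubarc Γ J ∧ z₁ ∈ J ∧ z₂ ∈ J ∧ μH[1] J = shorterArcLength Γ z₁ z₂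

/-- `Γ` is quasismooth (in the sense of Lavrentiev) with constant `Λ ≥ 1`:
`|Γ(z₁,z₂)| ≤ Λ |z₁ - z₂|`. -/
def IsQuasismooth (Γ : Set ℂ) (Λ : ℝ) : Prop :=
  1 ≤ Λ ∧ ∀ z₁ ∈ Γ, ∀ z₂ ∈ Γ,
    shorterArcLength Γ z₁ z₂ ≤ ENNReal.ofReal (Λ * dist z₁ z₂)

/-- The union of the unbounded connected components of `Γᶜ`; for a Jordan curve `Γ` this is
the (unique) unbounded component `Ω` of the complement of `Γ`. -/
def unboundedComponent (Γ : Set ℂ) : Set ℂ :=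
  {z | z ∉ Γ ∧ ¬ Bornology.IsBounded (connectedComponentIn Γᶜ z)}

/-- `d(A,B) := inf {|z-ζ| : z ∈ A, ζ ∈ B}`. -/
def setDist (A B : Set ℂ) : ℝ := sInf (Set.image2 dist A B)

/-- The exterior `𝔻*` of the closed unit disk (finite part). -/
def extDisk : Set ℂ := {w : ℂ | 1 < ‖w‖}

/-- `Φ` is the conformal (holomorphic bijective) map of `Ω` onto `𝔻* = {|w| > 1}` normalized
by `Φ(∞) = ∞` and `Φ'(∞) := lim_{z→∞} Φ(z)/z > 0`. -/
def IsExtConformal (Ω : Set ℂ) (Φ : ℂ → ℂ) : Prop :=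
  DifferentiableOn ℂ Φ Ω ∧ Set.BijOn Φ Ω extDisk ∧
    ∃ c : ℝ, 0 < c ∧
      Filter.Tendsto (fun z => Φ z / z) (Bornology.cobounded ℂ) (nhds (c : ℂ))

/-- `Φ` additionally extends to a homeomorphism of `closure Ω` onto `{|w| ≥ 1}`. -/
def IsExtConformalClosure (Ω : Set ℂ) (Φ : ℂ → ℂ) : Prop :=
  IsExtConformal Ω Φ ∧ ContinuousOn Φ (closure Ω) ∧
    Set.BijOn Φ (closure Ω) {w : ℂ | 1 ≤ ‖w‖}

/-- The level curve `Γ_δ := {ζ ∈ Ω : |Φ(ζ)| = 1 + δ}`. -/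
def levelCurve (Ω : Set ℂ) (Φ : ℂ → ℂ) (δ : ℝ) : Set ℂ :=
  {ζ ∈ Ω | ‖Φ ζ‖ = 1 + δ}

/-- `ρ_δ(z) := d({z}, Γ_δ)`. -/
def rho (Ω : Set ℂ) (Φ : ℂ → ℂ) (δ : ℝ) (z : ℂ) : ℝ :=
  Metric.infDist z (levelCurve Ω Φ δ)

/-- `ν ∈ A∞(Γ)` with constant `lam ≥ 1`: `ν(J) ≤ lam · ν(S)` for every subarc `J ⊂ Γ` and
every Borel set `S ⊂ J` with `|J| ≤ 2|S|`. -/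
def IsAInftyMeasure (Γ : Set ℂ) (ν : MeasureTheory.Measure ℂ) (lam : ℝ) : Prop :=
  1 ≤ lam ∧ ∀ J S : Set ℂ, IsSubarc Γ J → S ⊆ J → MeasurableSet S →
    μH[1] J ≤ 2 * μH[1] S → ν J ≤ ENNReal.ofReal lam * ν S

open scoped Real

/-! Let `Ψ = Φ⁻¹`, extended to `1 ≤ ‖t‖`. The length-area inequality, applied to injective images of
rectangles crossing a ring, gives Koebe-type distortion of `Ψ` on disks and hence a Harnack
inequality for `Ψ'`. In the coordinate `log t` it also yields, near any boundary square of side `l`,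
horizontal segments joining the boundary to the far side whose images have size comparable to
`l ‖Ψ'‖`. A subarc of `Γ` has diameter at most its length, so `Γ` has bounded turning. This controls
the image of the boundary side between two such segments, and the maximum principle extends the
control to the whole square. Thus a disk in the exterior and its boundary shadow have comparable
images, and this makes `Ψ` weakly quasisymmetric on `1 ≤ ‖t‖`.

In the plane, points at distances `4 ^ k * ρ` from a centre have well separated images, of which a
disk holds only boundedly many; therefore `Φ` is weakly quasisymmetric too. Every circle
centred at a point of either closed exterior meets that exterior, so the comparison can be iterated
along halved distances, which upgrades it to power estimates for both maps. -/

/-! ### The length-area method -/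

section LengthArea

lemma sq_lintegral_le_measure_univ_mul {X : Type*} [MeasurableSpace X] {μ : Measure X}
    {q : X → ℝ≥0∞} (hq : AEMeasurable q μ) :
    (∫⁻ x, q x ∂μ) ^ 2 ≤ μ univ * ∫⁻ x, q x ^ 2 ∂μ := by
  have holder := ENNReal.lintegral_mul_le_Lp_mul_Lq μ Real.HolderConjugate.two_two hq
    (aemeasurable_const (b := (1 : ℝ≥0∞)))
  simp only [Pi.mul_apply, mul_one, ENNReal.rpow_two, one_pow, lintegral_one] at holder
  calc (∫⁻ x, q x ∂μ) ^ 2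
      ≤ ((∫⁻ x, q x ^ 2 ∂μ) ^ (1 / 2 : ℝ) * μ univ ^ (1 / 2 : ℝ)) ^ 2 := by gcongr
    _ = μ univ * ∫⁻ x, q x ^ 2 ∂μ := by
      simp only [mul_pow, ← ENNReal.rpow_two, ← ENNReal.rpow_mul]
      norm_num [mul_comm]

lemma lintegral_reProdIm_comm {q : ℂ → ℝ≥0∞} {s t : Set ℝ} (hs : MeasurableSet s)
    (ht : MeasurableSet t) (hq : AEMeasurable q (volume.restrict (s ×ℂ t))) :
    ∫⁻ w in s ×ℂ t, q w = ∫⁻ y in t, ∫⁻ x in s, q (x + y * I) := by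
  have hpre : Complex.measurableEquivRealProd.symm ⁻¹' (s ×ℂ t) = s ×ˢ t := by
    ext; simp [mem_reProdIm]
  have hmeas : MeasurableSet (s ×ℂ t) :=
    (hs.preimage measurable_re).inter (ht.preimage measurable_im)
  have hmp : MeasurePreserving Complex.measurableEquivRealProd.symm
      ((volume.restrict s).prod (volume.restrict t)) (volume.restrict (s ×ℂ t)) := by
    rw [Measure.prod_restrict, ← Measure.volume_eq_prod, ← hpre]
    exact Complex.volume_preserving_equiv_real_prod.symm.restrict_preimage hmeas
  rw [← hmp.lintegral_comp_emb (MeasurableEquiv.measurableEmbedding _),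
    lintegral_prod_symm _ (by exact hq.comp_quasiMeasurePreserving hmp.quasiMeasurePreserving)]
  simp only [Complex.measurableEquivRealProd_symm_apply, Complex.mk_eq_add_mul_I]

lemma volume_reProdIm {s t : Set ℝ} (hs : MeasurableSet s) (ht : MeasurableSet t) :
    volume (s ×ℂ t) = volume s * volume t := by
  simpa [mul_comm] using lintegral_reProdIm_comm (q := 1) hs ht aemeasurable_const

lemma mul_sq_le_mul_lintegral_sq_of_le_lintegral {q : ℂ → ℝ≥0∞} {x₀ x₁ a b : ℝ} {ℓ : ℝ≥0∞}
    (hab : a < b) (hq : AEMeasurable q (volume.restrict (Ioo x₀ x₁ ×ℂ Ioo a b)))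
    (hℓ : ∀ y ∈ Ioo a b, ℓ ≤ ∫⁻ x in Ioo x₀ x₁, q (x + y * I)) :
    ENNReal.ofReal (b - a) * ℓ ^ 2 ≤
      ENNReal.ofReal (x₁ - x₀) * ∫⁻ w in Ioo x₀ x₁ ×ℂ Ioo a b, q w ^ 2 := by
  have hlength : ENNReal.ofReal (b - a) * ℓ ≤ ∫⁻ w in Ioo x₀ x₁ ×ℂ Ioo a b, q w := by
    rw [lintegral_reProdIm_comm measurableSet_Ioo measurableSet_Ioo hq, ← Real.volume_Ioo,
      mul_comm, ← setLIntegral_const]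
    exact setLIntegral_mono' measurableSet_Ioo hℓ
  have hcs := sq_lintegral_le_measure_univ_mul hq
  rw [Measure.restrict_apply_univ, volume_reProdIm measurableSet_Ioo measurableSet_Ioo,
    Real.volume_Ioo, Real.volume_Ioo] at hcs
  have hb0 : ENNReal.ofReal (b - a) ≠ 0 := by simpa using hab
  rw [← ENNReal.mul_le_mul_iff_right hb0 ENNReal.ofReal_ne_top]
  calc ENNReal.ofReal (b - a) * (ENNReal.ofReal (b - a) * ℓ ^ 2)
      = (ENNReal.ofReal (b - a) * ℓ) ^ 2 := by ring
    _ ≤ (∫⁻ w in Ioo x₀ x₁ ×ℂ Ioo a b, q w) ^ 2 := by gcongr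
    _ ≤ _ := hcs
    _ = _ := by ring

lemma lintegral_enorm_deriv_sq_mul_comp {f : ℂ → ℂ} {U : Set ℂ} (hU : IsOpen U)
    (hd : DifferentiableOn ℂ f U) (hinj : InjOn f U) (ρ : ℂ → ℝ≥0∞) :
    ∫⁻ w in U, ‖deriv f w‖ₑ ^ 2 * ρ (f w) = ∫⁻ z in f '' U, ρ z := by
  have hdet (c : ℂ) : ENNReal.ofReal |((ContinuousLinearMap.toSpanSingleton ℂ c).restrictScalars
      ℝ : ℂ →L[ℝ] ℂ).det| = ‖c‖ₑ ^ 2 := by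
    simp [ContinuousLinearMap.det, LinearMap.det_restrictScalars, Algebra.norm_complex_eq,
      Complex.normSq_eq_norm_sq, ENNReal.ofReal_pow]
  have hder : ∀ w ∈ U, HasFDerivWithinAt f
      ((ContinuousLinearMap.toSpanSingleton ℂ (deriv f w)).restrictScalars ℝ : ℂ →L[ℝ] ℂ) U w :=
    fun w hw => ((hd.differentiableAt (hU.mem_nhds hw)).hasDerivAt.hasFDerivAt.restrictScalars
      ℝ).hasFDerivWithinAt
  simp only [lintegral_image_eq_lintegral_abs_det_fderiv_mul volume hU.measurableSet hder hinj,
    hdet]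

/-- The density `1 / ‖z‖` of the logarithmic metric on the ring `r₁ < ‖z‖ < r₂`, extended by zero;
it is the extremal density for the curves crossing the ring. -/
def ringDensity {E : Type*} [Norm E] (r₁ r₂ : ℝ) (z : E) : ℝ≥0∞ :=
  (Ioo r₁ r₂).indicator (fun r => ENNReal.ofReal r⁻¹) ‖z‖

lemma measurable_ringDensity {E : Type*} [NormedAddCommGroup E] [MeasurableSpace E]
    [OpensMeasurableSpace E] (r₁ r₂ : ℝ) : Measurable (ringDensity r₁ r₂ : E → ℝ≥0∞) :=
  (measurable_inv.ennreal_ofReal.indicator measurableSet_Ioo).comp measurable_norm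

lemma hasDerivAt_log_norm {E : Type*} [NormedAddCommGroup E] [InnerProductSpace ℝ E]
    {g : ℝ → E} {g' : E} {x : ℝ} (hg : HasDerivAt g g' x) (h0 : g x ≠ 0) :
    HasDerivAt (fun x => Real.log ‖g x‖) (inner ℝ (g x) g' / ‖g x‖ ^ 2) x := by
  have hlog : (fun x => Real.log ‖g x‖) = fun x => Real.log (‖g x‖ ^ 2) / 2 := by ext; simp
  rw [hlog]
  exact ((hg.norm_sq.log (by positivity)).div_const 2).congr_deriv (by ring)

lemma ofReal_log_div_le_lintegral_ringDensity {E : Type*} [NormedAddCommGroup E]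
    [InnerProductSpace ℝ E] {g g' : ℝ → E} {s s' r₁ r₂ : ℝ} (hr₁ : 0 < r₁) (hr : r₁ < r₂)
    (hd : ∀ x ∈ uIcc s s', HasDerivAt g (g' x) x) (h₁ : ‖g s‖ ≤ r₁) (h₂ : r₂ ≤ ‖g s'‖) :
    ENNReal.ofReal (Real.log (r₂ / r₁)) ≤
      ∫⁻ x in uIcc s s', ‖g' x‖ₑ * ringDensity r₁ r₂ (g x) := by
  have hr₂ : 0 < r₂ := hr₁.trans hr
  have hcont : ContinuousOn (fun x => ‖g x‖) (uIcc s s') :=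
    fun x hx => (hd x hx).continuousAt.norm.continuousWithinAt
  set A : Set ℝ := uIcc s s' ∩ (fun x => ‖g x‖) ⁻¹' Ioo r₁ r₂
  have hA : MeasurableSet A := by
    obtain ⟨u, hu, hu'⟩ := continuousOn_iff'.1 hcont (Ioo r₁ r₂) isOpen_Ioo
    rw [show A = u ∩ uIcc s s' by rw [← hu', inter_comm]]
    exact hu.measurableSet.inter measurableSet_uIcc
  have hpos : ∀ x ∈ A, 0 < ‖g x‖ := fun x hx => hr₁.trans hx.2.1
  have himage : Ioo (Real.log r₁) (Real.log r₂) ⊆ (fun x => Real.log ‖g x‖) '' A := by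
    intro t ht
    have h1 : r₁ < Real.exp t := (Real.log_lt_iff_lt_exp hr₁).1 ht.1
    have h2 : Real.exp t < r₂ := (Real.lt_log_iff_exp_lt hr₂).1 ht.2
    obtain ⟨x, hx, hxt⟩ := intermediate_value_uIcc hcont
      (Icc_subset_uIcc ⟨h₁.trans h1.le, h2.le.trans h₂⟩)
    have hxt : ‖g x‖ = Real.exp t := hxt
    exact ⟨x, ⟨hx, by simp [hxt, h1, h2]⟩, by simp [hxt]⟩
  calc ENNReal.ofReal (Real.log (r₂ / r₁)) = volume (Ioo (Real.log r₁) (Real.log r₂)) := by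
        rw [Real.volume_Ioo, Real.log_div hr₂.ne' hr₁.ne']
    _ ≤ volume ((fun x => Real.log ‖g x‖) '' A) := measure_mono himage
    _ ≤ ∫⁻ x in A, ENNReal.ofReal |(ContinuousLinearMap.toSpanSingleton ℝ
          (inner ℝ (g x) (g' x) / ‖g x‖ ^ 2) : ℝ →L[ℝ] ℝ).det| :=
        addHaar_image_le_lintegral_abs_det_fderiv volume hA fun x hx =>
          (hasDerivAt_log_norm (hd x hx.1)
            (norm_pos_iff.1 (hpos x hx))).hasFDerivAt.hasFDerivWithinAt
    _ ≤ ∫⁻ x in A, ‖g' x‖ₑ * ringDensity r₁ r₂ (g x) := by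
        refine setLIntegral_mono' hA fun x hx => ?_
        have := hpos x hx
        rw [ringDensity, indicator_of_mem (by exact hx.2), ← ofReal_norm,
          ← ENNReal.ofReal_mul (norm_nonneg _)]
        refine ENNReal.ofReal_le_ofReal ?_
        simp only [ContinuousLinearMap.det, ContinuousLinearMap.toLinearMap_toSpanSingleton,
          LinearMap.det_ring, LinearMap.toSpanSingleton_apply, one_smul, abs_div, abs_pow, abs_norm]
        rw [← div_eq_mul_inv, div_le_div_iff₀ (by positivity) this]
        nlinarith [abs_real_inner_le_norm (g x) (g' x)]
    _ ≤ _ := lintegral_mono_set inter_subset_left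

lemma lintegral_ofReal_inv_Ioo {r₁ r₂ : ℝ} (hr₁ : 0 < r₁) (hr : r₁ ≤ r₂) :
    ∫⁻ r in Ioo r₁ r₂, ENNReal.ofReal r⁻¹ = ENNReal.ofReal (Real.log (r₂ / r₁)) := by
  have hint : IntervalIntegrable (fun r : ℝ => r⁻¹) volume r₁ r₂ :=
    intervalIntegral.intervalIntegrable_inv (fun r hr' => by
      rw [uIcc_of_le hr] at hr'; exact (hr₁.trans_le hr'.1).ne') continuousOn_id
  rw [restrict_Ioo_eq_restrict_Ioc, ← integral_inv_of_pos hr₁ (hr₁.trans_le hr),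
    intervalIntegral.integral_of_le hr, ofReal_integral_eq_lintegral_ofReal
      ((intervalIntegrable_iff_integrableOn_Ioc_of_le hr).1 hint)]
  filter_upwards [ae_restrict_mem measurableSet_Ioc] with r hr'
  exact inv_nonneg.2 (hr₁.trans hr'.1).le

lemma lintegral_ringDensity_sq {r₁ r₂ : ℝ} (hr₁ : 0 < r₁) (hr : r₁ < r₂) :
    ∫⁻ z : ℂ, ringDensity r₁ r₂ z ^ 2 = ENNReal.ofReal (2 * π * Real.log (r₂ / r₁)) := by
  have hpolar : ∫⁻ q in polarCoord.target, ENNReal.ofReal q.1 •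
        ringDensity r₁ r₂ (Complex.polarCoord.symm q) ^ 2 =
      ∫⁻ q in Ioo r₁ r₂ ×ˢ Ioo (-π) π, ENNReal.ofReal q.1⁻¹ := by
    rw [← lintegral_indicator polarCoord.open_target.measurableSet,
      ← lintegral_indicator (measurableSet_Ioo.prod measurableSet_Ioo)]
    congr 1 with q
    by_cases h1 : q.1 ∈ Ioo r₁ r₂
    · have hq : 0 < q.1 := hr₁.trans h1.1
      by_cases h2 : q.2 ∈ Ioo (-π) π
      · rw [indicator_of_mem (by exact ⟨hq, h2⟩), indicator_of_mem (by exact ⟨h1, h2⟩),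
          ringDensity, norm_polarCoord_symm, abs_of_pos hq, indicator_of_mem h1, smul_eq_mul,
          ← ENNReal.ofReal_pow (by positivity), ← ENNReal.ofReal_mul hq.le]
        congr 1; field_simp
      · simp [indicator, polarCoord_target, mem_prod, h2]
    · by_cases hq : 0 < q.1
      · simp [indicator, ringDensity, mem_prod, h1, abs_of_pos hq]
      · simp [indicator, polarCoord_target, mem_prod, h1, hq]
  rw [← Complex.lintegral_comp_polarCoord_symm, hpolar, Measure.volume_eq_prod,
    setLIntegral_prod _ (by fun_prop)]
  simp only [setLIntegral_const, Real.volume_Ioo]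
  rw [lintegral_mul_const' _ _ ENNReal.ofReal_ne_top, lintegral_ofReal_inv_Ioo hr₁ hr.le,
    mul_comm, ← ENNReal.ofReal_mul (by linarith [Real.pi_pos])]
  ring_nf

theorem sub_mul_log_div_le_of_crossing {f : ℂ → ℂ} {x₀ x₁ a b r₁ r₂ : ℝ} {p : ℂ} (hx : x₀ < x₁)
    (hab : a < b) (hr₁ : 0 < r₁) (hr : r₁ < r₂)
    (hd : DifferentiableOn ℂ f (Ioo x₀ x₁ ×ℂ Ioo a b)) (hinj : InjOn f (Ioo x₀ x₁ ×ℂ Ioo a b))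
    (hcross : ∀ y ∈ Ioo a b, ∃ s ∈ Icc x₀ x₁, ∃ s' ∈ Icc x₀ x₁,
      (∀ x ∈ uIcc s s', DifferentiableAt ℂ f (x + y * I)) ∧
        ‖f (s + y * I) - p‖ ≤ r₁ ∧ r₂ ≤ ‖f (s' + y * I) - p‖) :
    (b - a) * Real.log (r₂ / r₁) ≤ 2 * π * (x₁ - x₀) := by
  set R : Set ℂ := Ioo x₀ x₁ ×ℂ Ioo a b
  set ℓ := Real.log (r₂ / r₁)
  have hℓ : 0 < ℓ := Real.log_pos ((one_lt_div hr₁).2 hr)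
  have hRo : IsOpen R := isOpen_Ioo.reProdIm isOpen_Ioo
  set q : ℂ → ℝ≥0∞ := fun w => ‖deriv f w‖ₑ * ringDensity r₁ r₂ (f w - p)
  have hq : AEMeasurable q (volume.restrict R) :=
    (measurable_deriv f).enorm.aemeasurable.mul ((measurable_ringDensity r₁ r₂).comp_aemeasurable
      ((hd.continuousOn.aemeasurable hRo.measurableSet).sub_const p))
  have harea : ∫⁻ w in R, q w ^ 2 ≤ ENNReal.ofReal (2 * π * ℓ) := by
    simp only [q, mul_pow]
    rw [lintegral_enorm_deriv_sq_mul_comp hRo hd hinj fun z => ringDensity r₁ r₂ (z - p) ^ 2,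
      ← lintegral_ringDensity_sq hr₁ hr,
      ← lintegral_sub_right_eq_self (fun z : ℂ => ringDensity r₁ r₂ z ^ 2) p]
    exact setLIntegral_le_lintegral _ _
  have hlength : ∀ y ∈ Ioo a b, ENNReal.ofReal ℓ ≤ ∫⁻ x in Ioo x₀ x₁, q (x + y * I) := by
    intro y hy
    obtain ⟨s, hs, s', hs', hds, h1, h2⟩ := hcross y hy
    have hpath : ∀ x ∈ uIcc s s',
        HasDerivAt (fun x : ℝ => f (x + y * I) - p) (deriv f (x + y * I)) x := fun x hx =>
      HasDerivAt.comp_ofReal (e := fun z => f (z + y * I) - p)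
        (((hds x hx).hasDerivAt.comp_add_const _ _).sub_const p)
    rw [Measure.restrict_congr_set Ioo_ae_eq_Icc]
    exact (ofReal_log_div_le_lintegral_ringDensity hr₁ hr hpath h1 h2).trans
      (lintegral_mono_set (uIcc_subset_Icc hs hs'))
  have hmodulus : ENNReal.ofReal ((b - a) * ℓ ^ 2) ≤
      ENNReal.ofReal ((x₁ - x₀) * (2 * π * ℓ)) := by
    rw [ENNReal.ofReal_mul (sub_pos.2 hab).le, ENNReal.ofReal_pow hℓ.le,
      ENNReal.ofReal_mul (sub_pos.2 hx).le]
    exact (mul_sq_le_mul_lintegral_sq_of_le_lintegral hab hq hlength).trans (by gcongr)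
  have : 0 < x₁ - x₀ := sub_pos.2 hx
  rw [ENNReal.ofReal_le_ofReal_iff (by positivity)] at hmodulus
  exact le_of_mul_le_mul_right (by linarith) hℓ

end LengthArea

/-! ### Koebe-type distortion -/

section Koebe

lemma eq_of_exp_eq_of_abs_im_sub_lt {w w' : ℂ} (h : exp w = exp w')
    (him : |w.im - w'.im| < 2 * π) : w = w' := by
  obtain ⟨n, hn⟩ := exp_eq_exp_iff_exists_int.1 h
  have him_sub : w.im - w'.im = n * (2 * π) := by rw [hn]; simp
  rw [him_sub, abs_mul, abs_of_pos Real.two_pi_pos, mul_lt_iff_lt_one_left Real.two_pi_pos] at him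
  have hn0 : n = 0 := Int.abs_lt_one_iff.1 (by exact_mod_cast him)
  rw [hn, hn0, Int.cast_zero, zero_mul, add_zero]

lemma add_exp_I_mul_eq_circleMap (c : ℂ) (x y : ℝ) :
    c + exp (I * (x + y * I)) = circleMap c (Real.exp (-y)) x := by
  rw [circleMap, ofReal_exp, ← exp_add, ofReal_neg]
  congr 2
  linear_combination (y : ℂ) * I_mul_I

lemma exists_add_exp_I_mul_eq_of_mem_sphere {c ζ : ℂ} {y : ℝ}
    (hζ : ζ ∈ sphere c (Real.exp (-y))) :
    ∃ x ∈ Icc 0 (2 * π), c + exp (I * (x + y * I)) = ζ := by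
  rw [← abs_of_pos (Real.exp_pos (-y)), ← image_circleMap_Ioc] at hζ
  obtain ⟨x, hx, rfl⟩ := hζ
  exact ⟨x, Ioc_subset_Icc_self hx, add_exp_I_mul_eq_circleMap c x y⟩

theorem log_div_mul_log_div_le_of_circles {f : ℂ → ℂ} {c p : ℂ} {a b r₁ r₂ : ℝ} (ha : 0 < a)
    (hab : a < b) (hd : DifferentiableOn ℂ f (ball c b \ closedBall c a))
    (hinj : InjOn f (ball c b \ closedBall c a)) (hr₁ : 0 < r₁) (hr : r₁ < r₂)
    (h : ∀ u ∈ Ioo a b, ∃ ζ₁ ∈ sphere c u, ∃ ζ₂ ∈ sphere c u,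
      ‖f ζ₁ - p‖ ≤ r₁ ∧ r₂ ≤ ‖f ζ₂ - p‖) :
    Real.log (b / a) * Real.log (r₂ / r₁) ≤ 4 * π ^ 2 := by
  have hb : 0 < b := ha.trans hab
  have hradius : ∀ y ∈ Ioo (-Real.log b) (-Real.log a), Real.exp (-y) ∈ Ioo a b := fun y hy =>
    ⟨(Real.log_lt_iff_lt_exp ha).1 (lt_neg_of_lt_neg hy.2),
      (Real.lt_log_iff_exp_lt hb).1 (neg_lt.1 hy.1)⟩
  have hmem : ∀ z : ℂ, z.im ∈ Ioo (-Real.log b) (-Real.log a) →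
      c + exp (I * z) ∈ ball c b \ closedBall c a := by
    intro z hz
    have hdist : dist (c + exp (I * z)) c = Real.exp (-z.im) := by
      rw [dist_eq_norm, add_sub_cancel_left, norm_exp, I_mul_re]
    rw [Set.mem_sdiff, mem_ball, mem_closedBall, not_le, hdist]
    exact (hradius z.im hz).symm
  have hdiff : ∀ z : ℂ, z.im ∈ Ioo (-Real.log b) (-Real.log a) →
      DifferentiableAt ℂ (fun z => f (c + exp (I * z))) z := fun z hz =>
    DifferentiableAt.comp (f := fun z => c + exp (I * z)) z
      (hd.differentiableAt ((isOpen_ball.sdiff isClosed_closedBall).mem_nhds (hmem z hz)))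
      (by fun_prop)
  have key := sub_mul_log_div_le_of_crossing (f := fun z => f (c + exp (I * z))) (p := p)
    Real.two_pi_pos (neg_lt_neg (Real.log_lt_log ha hab)) hr₁ hr
    (fun z hz => (hdiff z hz.2).differentiableWithinAt) (fun z hz z' hz' heq => ?_)
    fun y hy => ?_
  · rw [Real.log_div hb.ne' ha.ne']
    linarith
  · have hexp := add_left_cancel (hinj (hmem z hz.2) (hmem z' hz'.2) heq)
    refine mul_left_cancel₀ I_ne_zero (eq_of_exp_eq_of_abs_im_sub_lt hexp ?_)
    rw [I_mul_im, I_mul_im, abs_sub_lt_iff]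
    constructor <;> linarith [hz.1.1, hz.1.2, hz'.1.1, hz'.1.2]
  · obtain ⟨ζ₁, hζ₁, ζ₂, hζ₂, h₁, h₂⟩ := h _ (hradius y hy)
    obtain ⟨x, hx, rfl⟩ := exists_add_exp_I_mul_eq_of_mem_sphere hζ₁
    obtain ⟨x', hx', rfl⟩ := exists_add_exp_I_mul_eq_of_mem_sphere hζ₂
    exact ⟨x, hx, x', hx', fun v _ => hdiff _ (by simpa using hy), h₁, h₂⟩

/-- An upper bound for the oscillation ratio `max ‖f - p‖ / min ‖f - p‖` along some circle of each
ring of modulus `log 2` on which `f` is injective and holomorphic. -/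
def koebeConst : ℝ := Real.exp (4 * π ^ 2 / Real.log 2)

lemma one_le_koebeConst : 1 ≤ koebeConst :=
  Real.one_le_exp (div_nonneg (by positivity) (Real.log_nonneg one_le_two))

lemma koebeConst_pos : 0 < koebeConst := Real.exp_pos _

lemma le_koebeConst_mul_of_circles {f : ℂ → ℂ} {c p : ℂ} {t r₁ r₂ : ℝ} (ht : 0 < t)
    (hd : DifferentiableOn ℂ f (ball c (2 * t) \ closedBall c t))
    (hinj : InjOn f (ball c (2 * t) \ closedBall c t)) (hr₁ : 0 ≤ r₁)
    (h : ∀ u ∈ Ioo t (2 * t), ∃ ζ₁ ∈ sphere c u, ∃ ζ₂ ∈ sphere c u,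
      ‖f ζ₁ - p‖ ≤ r₁ ∧ r₂ ≤ ‖f ζ₂ - p‖) : r₂ ≤ koebeConst * r₁ := by
  have hlt : ∀ r > r₁, r₂ ≤ koebeConst * r := by
    intro r hr
    have hr0 : 0 < r := hr₁.trans_lt hr
    rcases le_or_gt r₂ r with hrr | hrr
    · exact hrr.trans (le_mul_of_one_le_left hr0.le one_le_koebeConst)
    have key := log_div_mul_log_div_le_of_circles ht (by linarith) hd hinj hr0 hrr fun u hu => by
      obtain ⟨ζ₁, hζ₁, ζ₂, hζ₂, h₁, h₂⟩ := h u hu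
      exact ⟨ζ₁, hζ₁, ζ₂, hζ₂, h₁.trans hr.le, h₂⟩
    rw [mul_div_cancel_right₀ _ ht.ne', mul_comm, ← le_div_iff₀ (Real.log_pos one_lt_two),
      Real.log_le_iff_le_exp (div_pos (hr0.trans hrr) hr0), div_le_iff₀ hr0] at key
    exact key
  rw [mul_comm, ← div_le_iff₀ koebeConst_pos]
  exact le_of_forall_gt_imp_ge_of_dense fun r hr => (div_le_iff₀' koebeConst_pos).2 (hlt r hr)

section Sphere

variable {f : ℂ → ℂ} {c : ℂ} {R : ℝ}

lemma exists_mem_sphere_norm_sub_le_of_mem_closedBall (hR : 0 < R)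
    (hd : DiffContOnCl ℂ f (ball c R)) (p : ℂ) {w : ℂ} (hw : w ∈ closedBall c R) :
    ∃ ζ ∈ sphere c R, ‖f w - p‖ ≤ ‖f ζ - p‖ := by
  obtain ⟨ζ, hζ, hmax⟩ := exists_mem_frontier_isMaxOn_norm isBounded_ball ⟨c, mem_ball_self hR⟩
    (hd.sub_const p)
  rw [frontier_ball c hR.ne'] at hζ
  rw [← closure_ball c hR.ne'] at hw
  exact ⟨ζ, hζ, hmax hw⟩

lemma exists_mem_sphere_mul_norm_deriv_le (hR : 0 < R) (hd : DiffContOnCl ℂ f (ball c R)) :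
    ∃ ζ ∈ sphere c R, R * ‖deriv f c‖ ≤ ‖f ζ - f c‖ := by
  have hcont : ContinuousOn (fun ζ => ‖f ζ - f c‖) (sphere c R) :=
    ((hd.continuousOn_ball.mono sphere_subset_closedBall).sub continuousOn_const).norm
  obtain ⟨ζ, hζ, hmax⟩ :=
    (isCompact_sphere c R).exists_isMaxOn (NormedSpace.sphere_nonempty.2 hR.le) hcont
  have hcauchy := norm_deriv_le_of_forall_mem_sphere_norm_le hR (hd.sub_const (f c)) hmax
  rw [deriv_sub_const, le_div_iff₀' hR] at hcauchy
  exact ⟨ζ, hζ, hcauchy⟩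

lemma exists_mem_sphere_norm_sub_le_mul_norm_deriv (hR : 0 < R)
    (hd : DiffContOnCl ℂ f (ball c R)) (hinj : InjOn f (closedBall c R)) (h0 : deriv f c ≠ 0) :
    ∃ ζ ∈ sphere c R, ‖f ζ - f c‖ ≤ R * ‖deriv f c‖ := by
  have hne : ∀ z ∈ closedBall c R, dslope f c z ≠ 0 := by
    intro z hz
    rcases eq_or_ne z c with rfl | hzc
    · rwa [dslope_same]
    · rw [dslope_of_ne _ hzc, slope_def_field]
      exact div_ne_zero (sub_ne_zero.2 <| hinj.ne hz (mem_closedBall_self hR.le) hzc)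
        (sub_ne_zero.2 hzc)
  have hslope : DiffContOnCl ℂ (dslope f c) (ball c R) := by
    refine ⟨(differentiableOn_dslope (ball_mem_nhds c hR)).2 hd.differentiableOn, ?_⟩
    rw [closure_ball c hR.ne', continuousOn_dslope (closedBall_mem_nhds c hR)]
    exact ⟨hd.continuousOn_ball, hd.differentiableAt isOpen_ball (mem_ball_self hR)⟩
  obtain ⟨ζ, hζ, hmax⟩ := exists_mem_frontier_isMaxOn_norm isBounded_ball ⟨c, mem_ball_self hR⟩
    (hslope.inv fun z hz => hne z (by rwa [closure_ball c hR.ne'] at hz))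
  rw [frontier_ball c hR.ne'] at hζ
  have hζc : ζ ≠ c := ne_of_mem_sphere hζ hR.ne'
  have hle : ‖dslope f c ζ‖ ≤ ‖deriv f c‖ := by
    have h := hmax (subset_closure (mem_ball_self hR))
    simp only [mem_ofPred_eq, Function.comp_apply, Pi.inv_apply, norm_inv, dslope_same] at h
    exact (inv_le_inv₀ (norm_pos_iff.2 h0)
      (norm_pos_iff.2 (hne ζ (sphere_subset_closedBall hζ)))).1 h
  rw [dslope_of_ne _ hζc, slope_def_field, norm_div, mem_sphere_iff_norm.1 hζ,
    div_le_iff₀' hR] at hle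
  exact ⟨ζ, hζ, hle⟩

lemma exists_mem_sphere_norm_sub_le_three_mul (hR : 0 < R) (hd : DiffContOnCl ℂ f (ball c R))
    {w : ℂ} (hw : w ∉ closedBall c R) (hinj : InjOn f (insert w (closedBall c R))) :
    ∃ ζ ∈ sphere c R, ‖f ζ - f c‖ ≤ 3 * ‖f w - f c‖ := by
  by_contra! hcon
  have hc : c ∈ closedBall c R := mem_closedBall_self hR.le
  have hinj' : InjOn f (closedBall c R) := hinj.mono (subset_insert _ _)
  have hpos : 0 < ‖f w - f c‖ := norm_pos_iff.2 <| sub_ne_zero.2 <|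
    hinj.ne (mem_insert _ _) (mem_insert_of_mem _ hc) (ne_of_mem_of_not_mem hc hw).symm
  have hnonconst : ∃ᶠ z in 𝓝 c, f z ≠ f c := by
    refine Frequently.filter_mono (Eventually.frequently ?_) (nhdsWithin_le_nhds (s := {c}ᶜ))
    filter_upwards [self_mem_nhdsWithin, mem_nhdsWithin_of_mem_nhds (closedBall_mem_nhds c hR)]
      with z hzc hz using hinj'.ne hz hc hzc
  have himage := hd.ball_subset_image_closedBall hR (fun z hz => (hcon z hz).le) hnonconst
  obtain ⟨w', hw', hfw⟩ := himage (show f w ∈ ball (f c) _ by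
    rw [mem_ball, dist_eq_norm]; linarith)
  exact hw (hinj (mem_insert_of_mem _ hw') (mem_insert _ _) hfw ▸ hw')

end Sphere

variable {f : ℂ → ℂ} {c w : ℂ} {s : ℝ}

theorem mul_norm_deriv_le_of_le_dist (hs : 0 < s) (hd : DifferentiableOn ℂ f (ball c s))
    (hinj : InjOn f (insert w (ball c s))) (hw : s / 2 ≤ dist w c) :
    s * ‖deriv f c‖ ≤ 12 * koebeConst * ‖f w - f c‖ := by
  have hring : ball c (2 * (s / 4)) \ closedBall c (s / 4) ⊆ ball c s :=
    sdiff_subset.trans (ball_subset_ball (by linarith))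
  have key := le_koebeConst_mul_of_circles (f := f) (p := f c) (r₁ := 3 * ‖f w - f c‖)
    (r₂ := s / 4 * ‖deriv f c‖) (by positivity) (hd.mono hring)
    (hinj.mono (hring.trans (subset_insert _ _))) (by positivity) fun u hu => ?_
  · linarith
  have hu0 : 0 < u := by linarith [hu.1]
  have hus : closedBall c u ⊆ ball c s := closedBall_subset_ball (by linarith [hu.2])
  have hdu : DiffContOnCl ℂ f (ball c u) := hd.diffContOnCl_ball hus
  obtain ⟨ζ₁, hζ₁, h₁⟩ := exists_mem_sphere_norm_sub_le_three_mul hu0 hdu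
    (w := w) (by rw [mem_closedBall, not_le]; linarith [hu.2])
    (hinj.mono (insert_subset_insert hus))
  obtain ⟨ζ₂, hζ₂, h₂⟩ := exists_mem_sphere_mul_norm_deriv_le hu0 hdu
  exact ⟨ζ₁, hζ₁, ζ₂, hζ₂, h₁, le_trans (by gcongr; exact hu.1.le) h₂⟩

theorem norm_sub_le_mul_norm_deriv (hs : 0 < s) (hd : DifferentiableOn ℂ f (ball c s))
    (hinj : InjOn f (ball c s)) (h0 : deriv f c ≠ 0) (hw : dist w c ≤ s / 2) :
    ‖f w - f c‖ ≤ koebeConst * (s * ‖deriv f c‖) := by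
  have hring : ball c (2 * (s / 2)) \ closedBall c (s / 2) ⊆ ball c s :=
    sdiff_subset.trans (ball_subset_ball (by linarith))
  refine le_koebeConst_mul_of_circles (f := f) (p := f c) (half_pos hs) (hd.mono hring)
    (hinj.mono hring) (by positivity) fun u hu => ?_
  have hu0 : 0 < u := by linarith [hu.1]
  have hus : closedBall c u ⊆ ball c s := closedBall_subset_ball (by linarith [hu.2])
  have hdu : DiffContOnCl ℂ f (ball c u) := hd.diffContOnCl_ball hus
  obtain ⟨ζ₁, hζ₁, h₁⟩ :=
    exists_mem_sphere_norm_sub_le_mul_norm_deriv hu0 hdu (hinj.mono hus) h0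
  obtain ⟨ζ₂, hζ₂, h₂⟩ := exists_mem_sphere_norm_sub_le_of_mem_closedBall hu0 hdu (f c)
    (w := w) (by rw [mem_closedBall]; linarith [hu.1])
  exact ⟨ζ₁, hζ₁, ζ₂, hζ₂, h₁.trans (by gcongr; linarith [hu.2]), h₂⟩

end Koebe

section Harnack

/-- The constant comparing the derivatives of an injective holomorphic function at the centre of a
disk and at a point of the concentric disk of half the radius. -/
def harnackConst : ℝ := 12 * koebeConst ^ 2

lemma one_le_harnackConst : 1 ≤ harnackConst := by
  rw [harnackConst]
  nlinarith [one_le_koebeConst]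

lemma harnackConst_pos : 0 < harnackConst := zero_lt_one.trans_le one_le_harnackConst

variable {f : ℂ → ℂ} {s : ℝ}

theorem norm_deriv_le_harnackConst_mul {w w' : ℂ} (hd : DifferentiableOn ℂ f (ball w s))
    (hinj : InjOn f (ball w s)) (hd' : DifferentiableOn ℂ f (ball w' s))
    (hinj' : InjOn f (ball w' s)) (h0 : deriv f w ≠ 0) (hww' : dist w w' ≤ s / 2) :
    ‖deriv f w'‖ ≤ harnackConst * ‖deriv f w‖ := by
  rcases eq_or_ne w w' with rfl | hne
  · exact le_mul_of_one_le_left (norm_nonneg _) one_le_harnackConst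
  have hr0 : 0 < 2 * dist w w' := mul_pos two_pos (dist_pos.2 hne)
  have hrs : 2 * dist w w' ≤ s := by linarith
  have hsub := ball_subset_ball (x := w) hrs
  have hsub' := ball_subset_ball (x := w') hrs
  have hlower : 2 * dist w w' * ‖deriv f w'‖ ≤ 12 * koebeConst * ‖f w - f w'‖ :=
    mul_norm_deriv_le_of_le_dist hr0 (hd'.mono hsub')
      (hinj'.mono (insert_subset (by rw [mem_ball]; linarith) hsub')) (by linarith)
  have hupper : ‖f w' - f w‖ ≤ koebeConst * (2 * dist w w' * ‖deriv f w‖) :=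
    norm_sub_le_mul_norm_deriv hr0 (hd.mono hsub) (hinj.mono hsub) h0 (by rw [dist_comm]; linarith)
  refine le_of_mul_le_mul_left ?_ hr0
  calc 2 * dist w w' * ‖deriv f w'‖
      ≤ 12 * koebeConst * (koebeConst * (2 * dist w w' * ‖deriv f w‖)) := by
        rw [norm_sub_rev] at hlower
        exact hlower.trans (mul_le_mul_of_nonneg_left hupper (by linarith [koebeConst_pos]))
    _ = 2 * dist w w' * (harnackConst * ‖deriv f w‖) := by rw [harnackConst]; ring

variable {U : Set ℂ} (hU : Convex ℝ U) (hd : ∀ v ∈ U, DifferentiableOn ℂ f (ball v s))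
  (hinj : ∀ v ∈ U, InjOn f (ball v s)) (h0 : ∀ v ∈ U, deriv f v ≠ 0)
include hU hd hinj h0

theorem norm_deriv_le_harnackConst_pow_mul (n : ℕ) {w w' : ℂ} (hw : w ∈ U) (hw' : w' ∈ U)
    (hww' : dist w w' ≤ n * (s / 2)) : ‖deriv f w'‖ ≤ harnackConst ^ n * ‖deriv f w‖ := by
  induction n generalizing w' with
  | zero =>
    rw [Nat.cast_zero, zero_mul, dist_le_zero] at hww'
    rw [hww', pow_zero, one_mul]
  | succ n ih =>
    have hn : (0 : ℝ) < n + 1 := by positivity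
    push_cast at hww'
    set v : ℂ := AffineMap.lineMap w w' ((n : ℝ) / (n + 1)) with hv
    have hvU : v ∈ U := hU.lineMap_mem hw hw' ⟨by positivity, by rw [div_le_one hn]; linarith⟩
    have hwv : dist w v ≤ n * (s / 2) := by
      rw [hv, dist_left_lineMap, Real.norm_of_nonneg (by positivity), div_mul_eq_mul_div,
        div_le_iff₀ hn]
      nlinarith [n.cast_nonneg (α := ℝ)]
    have hvw' : dist v w' ≤ s / 2 := by
      rw [hv, dist_lineMap_right, show 1 - (n : ℝ) / (n + 1) = 1 / (n + 1) by field_simp; ring,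
        Real.norm_of_nonneg (by positivity), div_mul_eq_mul_div, div_le_iff₀ hn]
      linarith
    calc ‖deriv f w'‖ ≤ harnackConst * ‖deriv f v‖ :=
          norm_deriv_le_harnackConst_mul (hd v hvU) (hinj v hvU) (hd w' hw') (hinj w' hw')
            (h0 v hvU) hvw'
      _ ≤ harnackConst * (harnackConst ^ n * ‖deriv f w‖) :=
          mul_le_mul_of_nonneg_left (ih hvU hwv) harnackConst_pos.le
      _ = harnackConst ^ (n + 1) * ‖deriv f w‖ := by ring

theorem norm_sub_le_harnackConst_pow_mul (hs : 0 < s) (n : ℕ) {w w' : ℂ} (hw : w ∈ U)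
    (hw' : w' ∈ U) (hww' : dist w w' ≤ n * (s / 2)) :
    ‖f w' - f w‖ ≤ harnackConst ^ n * ‖deriv f w‖ * dist w w' := by
  rw [dist_comm, dist_eq_norm]
  have hseg : segment ℝ w w' ⊆ U := hU.segment_subset hw hw'
  refine (convex_segment w w').norm_image_sub_le_of_norm_deriv_le
    (fun x hx => (hd x (hseg hx)).differentiableAt (ball_mem_nhds x hs)) (fun x hx => ?_)
    (left_mem_segment ℝ w w') (right_mem_segment ℝ w w')
  refine norm_deriv_le_harnackConst_pow_mul hU hd hinj h0 n hw (hseg hx) (le_trans ?_ hww')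
  rw [segment_eq_image_lineMap] at hx
  obtain ⟨θ, hθ, rfl⟩ := hx
  rw [dist_left_lineMap, Real.norm_of_nonneg hθ.1]
  exact mul_le_of_le_one_left dist_nonneg hθ.2

end Harnack

/-! ### The exterior parametrization in logarithmic coordinates -/

lemma isOpen_extDisk : IsOpen extDisk := isOpen_lt continuous_const continuous_norm

lemma exp_mem_extDisk {w : ℂ} (hw : 0 < w.re) : exp w ∈ extDisk := by
  rw [extDisk, mem_ofPred_eq, norm_exp]
  exact Real.one_lt_exp_iff.2 hw

lemma one_le_norm_exp {w : ℂ} (hw : 0 ≤ w.re) : 1 ≤ ‖exp w‖ := by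
  rw [norm_exp]
  exact Real.one_le_exp hw

lemma ball_subset_extDisk {τ : ℂ} {s : ℝ} (hs : s ≤ ‖τ‖ - 1) : ball τ s ⊆ extDisk := fun t ht => by
  rw [mem_ball, dist_comm, dist_eq_norm] at ht
  have := norm_sub_norm_le τ t
  rw [extDisk, mem_ofPred_eq]
  linarith

lemma ball_subset_one_le_norm {τ : ℂ} {s : ℝ} (hs : s ≤ ‖τ‖ - 1) :
    ball τ s ⊆ {t : ℂ | 1 ≤ ‖t‖} :=
  fun t ht => le_of_lt (show 1 < ‖t‖ from ball_subset_extDisk hs ht)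

lemma ball_subset_reProdIm (c : ℂ) (s : ℝ) :
    ball c s ⊆ Ioo (c.re - s) (c.re + s) ×ℂ Ioo (c.im - s) (c.im + s) := fun z hz => by
  rw [mem_ball, dist_eq_norm] at hz
  have hre := abs_sub_lt_iff.1 ((abs_re_le_norm (z - c)).trans_lt hz)
  have him := abs_sub_lt_iff.1 ((abs_im_le_norm (z - c)).trans_lt hz)
  exact ⟨⟨by linarith [hre.2], by linarith [hre.1]⟩, ⟨by linarith [him.2], by linarith [him.1]⟩⟩

lemma re_add_mul_I (x y : ℝ) : (x + y * I : ℂ).re = x := by simp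

lemma im_add_mul_I (x y : ℝ) : (x + y * I : ℂ).im = y := by simp

lemma dist_add_mul_I_of_re_eq (x y₁ y₂ : ℝ) : dist (x + y₁ * I : ℂ) (x + y₂ * I) = |y₁ - y₂| := by
  rw [dist_of_re_eq (by simp), im_add_mul_I, im_add_mul_I, Real.dist_eq]

lemma dist_add_mul_I_of_im_eq (x₁ x₂ y : ℝ) : dist (x₁ + y * I : ℂ) (x₂ + y * I) = |x₁ - x₂| := by
  rw [dist_of_im_eq (by simp), re_add_mul_I, re_add_mul_I, Real.dist_eq]

/-- The properties of the inverse `Ψ` of an exterior conformal map that its distortion theory rests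
on. The field `lower` encodes that `Ψ'` does not degenerate at infinity. -/
structure IsExtParam (Ψ : ℂ → ℂ) : Prop where
  differentiableOn : DifferentiableOn ℂ Ψ extDisk
  deriv_ne_zero : ∀ t ∈ extDisk, deriv Ψ t ≠ 0
  injOn : InjOn Ψ {t : ℂ | 1 ≤ ‖t‖}
  continuousOn : ContinuousOn Ψ {t : ℂ | 1 ≤ ‖t‖}
  growth : ∃ B > 0, ∀ t : ℂ, 1 ≤ ‖t‖ → ‖Ψ t‖ ≤ B * ‖t‖
  lower : ∀ r : ℝ, 1 < r → ∃ m > 0, ∀ t : ℂ, r ≤ ‖t‖ → m ≤ ‖deriv Ψ t‖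

/-- A map `Ψ` of the exterior of the unit disk in the logarithmic coordinate `w = log t`, in which
the unit circle becomes the imaginary axis. -/
def logCoord (Ψ : ℂ → ℂ) (w : ℂ) : ℂ := Ψ (exp w)

namespace IsExtParam

variable {Ψ : ℂ → ℂ} (h : IsExtParam Ψ)
include h

lemma hasDerivAt_logCoord {w : ℂ} (hw : 0 < w.re) :
    HasDerivAt (logCoord Ψ) (deriv Ψ (exp w) * exp w) w :=
  (h.differentiableOn.differentiableAt
    (isOpen_extDisk.mem_nhds (exp_mem_extDisk hw))).hasDerivAt.comp w (Complex.hasDerivAt_exp w)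

lemma norm_deriv_logCoord {w : ℂ} (hw : 0 < w.re) :
    ‖deriv (logCoord Ψ) w‖ = ‖deriv Ψ (exp w)‖ * Real.exp w.re := by
  rw [(h.hasDerivAt_logCoord hw).deriv, norm_mul, norm_exp]

lemma deriv_logCoord_ne_zero {w : ℂ} (hw : 0 < w.re) : deriv (logCoord Ψ) w ≠ 0 := by
  rw [(h.hasDerivAt_logCoord hw).deriv]
  exact mul_ne_zero (h.deriv_ne_zero _ (exp_mem_extDisk hw)) (exp_ne_zero _)

lemma continuousOn_logCoord : ContinuousOn (logCoord Ψ) {w : ℂ | 0 ≤ w.re} :=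
  h.continuousOn.comp continuous_exp.continuousOn fun _ hw => one_le_norm_exp hw

lemma differentiableOn_logCoord : DifferentiableOn ℂ (logCoord Ψ) {w : ℂ | 0 < w.re} :=
  fun _ hw => (h.hasDerivAt_logCoord hw).differentiableAt.differentiableWithinAt

lemma injOn_logCoord {a b : ℝ} (hab : b - a ≤ 2 * π) :
    InjOn (logCoord Ψ) (Ici 0 ×ℂ Ioo a b) := fun w hw w' hw' heq =>
  eq_of_exp_eq_of_abs_im_sub_lt
    (h.injOn (one_le_norm_exp hw.1) (one_le_norm_exp hw'.1) heq) <| by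
      rw [abs_sub_lt_iff]
      constructor <;> linarith [hw.2.1, hw.2.2, hw'.2.1, hw'.2.2]

lemma differentiableOn_logCoord_ball {v : ℂ} {s : ℝ} (hv : s ≤ v.re) :
    DifferentiableOn ℂ (logCoord Ψ) (ball v s) :=
  h.differentiableOn_logCoord.mono fun w hw => by
    have := (ball_subset_reProdIm v s hw).1.1
    rw [mem_ofPred_eq]
    linarith

lemma injOn_logCoord_ball {v : ℂ} {s : ℝ} (hv : s ≤ v.re) (hs : s ≤ π) :
    InjOn (logCoord Ψ) (ball v s) :=
  (h.injOn_logCoord (a := v.im - s) (b := v.im + s) (by linarith)).mono <|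
    (ball_subset_reProdIm v s).trans (inter_subset_inter_left _ fun _ hw =>
      (sub_nonneg.2 hv).trans hw.1.le)

section HalfPlane

variable {s : ℝ} (hs : 0 < s) (hsπ : s ≤ π) (n : ℕ) {w w' : ℂ} (hw : s ≤ w.re) (hw' : s ≤ w'.re)
  (hww' : dist w w' ≤ n * (s / 2))
include hs hsπ hw hw' hww'

lemma norm_deriv_logCoord_le :
    ‖deriv (logCoord Ψ) w'‖ ≤ harnackConst ^ n * ‖deriv (logCoord Ψ) w‖ :=
  norm_deriv_le_harnackConst_pow_mul (convex_halfSpace_re_ge s)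
    (fun _ hv => h.differentiableOn_logCoord_ball hv) (fun _ hv => h.injOn_logCoord_ball hv hsπ)
    (fun _ hv => h.deriv_logCoord_ne_zero (hs.trans_le hv)) n hw hw' hww'

lemma norm_logCoord_sub_le : ‖logCoord Ψ w' - logCoord Ψ w‖ ≤
    harnackConst ^ n * ‖deriv (logCoord Ψ) w‖ * dist w w' :=
  norm_sub_le_harnackConst_pow_mul (convex_halfSpace_re_ge s)
    (fun _ hv => h.differentiableOn_logCoord_ball hv) (fun _ hv => h.injOn_logCoord_ball hv hsπ)
    (fun _ hv => h.deriv_logCoord_ne_zero (hs.trans_le hv)) hs n hw hw' hww'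

end HalfPlane

end IsExtParam

section Rectangles

lemma exists_mem_Ioc_of_continuousOn_Icc {X : Type*} [TopologicalSpace X] {g : ℝ → X} {a b x : ℝ}
    (hab : a < b) (hg : ContinuousOn g (Icc a b)) (hx : x ∈ Icc a b) {V : Set X} (hV : IsOpen V)
    (hgx : g x ∈ V) : ∃ x' ∈ Ioc a b, g x' ∈ V := by
  have hne : (𝓝[Ioc a b] x).NeBot := by
    rwa [← mem_closure_iff_nhdsWithin_neBot, closure_Ioc hab.ne]
  have hev : ∀ᶠ x' in 𝓝[Ioc a b] x, g x' ∈ V :=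
    ((hg x hx).mono Ioc_subset_Icc_self) (hV.mem_nhds hgx)
  obtain ⟨x', hgx', hx'⟩ := (hev.and self_mem_nhdsWithin).exists
  exact ⟨x', hx', hgx'⟩

lemma norm_le_of_forall_side_norm_le {E : Type*} [NormedAddCommGroup E] [NormedSpace ℂ E]
    {f : ℂ → E} {x₀ x₁ y₀ y₁ R : ℝ} (hx : x₀ < x₁) (hy : y₀ < y₁)
    (hd : DiffContOnCl ℂ f (Ioo x₀ x₁ ×ℂ Ioo y₀ y₁))
    (hbot : ∀ x ∈ Icc x₀ x₁, ‖f (x + y₀ * I)‖ ≤ R) (htop : ∀ x ∈ Icc x₀ x₁, ‖f (x + y₁ * I)‖ ≤ R)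
    (hleft : ∀ y ∈ Icc y₀ y₁, ‖f (x₀ + y * I)‖ ≤ R)
    (hright : ∀ y ∈ Icc y₀ y₁, ‖f (x₁ + y * I)‖ ≤ R) {w : ℂ}
    (hw : w ∈ Icc x₀ x₁ ×ℂ Icc y₀ y₁) : ‖f w‖ ≤ R := by
  refine norm_le_of_forall_mem_frontier_norm_le
    ((isBounded_Ioo _ _).reProdIm (isBounded_Ioo _ _)) hd (fun z hz => ?_) ?_
  · rw [frontier_reProdIm, closure_Ioo hx.ne, closure_Ioo hy.ne, frontier_Ioo hx,
      frontier_Ioo hy] at hz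
    rw [← re_add_im z]
    rcases hz with ⟨hre, him | him⟩ | ⟨hre | hre, him⟩
    · exact him ▸ hbot _ hre
    · exact (mem_singleton_iff.1 him) ▸ htop _ hre
    · exact hre ▸ hleft _ him
    · exact (mem_singleton_iff.1 hre) ▸ hright _ him
  · rwa [closure_reProdIm, closure_Ioo hx.ne, closure_Ioo hy.ne]

end Rectangles

/-- Bounded turning of the boundary values of `Ψ`: on each arc of the unit circle of length at most
`π`, the distances from an endpoint are controlled by the distance of the endpoints. -/
structure HasBoundedTurningParam (Ψ : ℂ → ℂ) (M : ℝ) : Prop where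
  one_le : 1 ≤ M
  norm_sub_le : ∀ y₁ y₂ y : ℝ, y₂ ≤ y₁ + π → y ∈ Icc y₁ y₂ →
    ‖Ψ (exp (y * I)) - Ψ (exp (y₁ * I))‖ ≤ M * ‖Ψ (exp (y₁ * I)) - Ψ (exp (y₂ * I))‖

lemma HasBoundedTurningParam.norm_sub_le_of_endpoints {Ψ : ℂ → ℂ} {M : ℝ}
    (hM : HasBoundedTurningParam Ψ M) {y₁ y₂ y R : ℝ} {p : ℂ} (hπ : y₂ ≤ y₁ + π)
    (hy : y ∈ Icc y₁ y₂) (h₁ : ‖Ψ (exp (y₁ * I)) - p‖ ≤ R) (h₂ : ‖Ψ (exp (y₂ * I)) - p‖ ≤ R) :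
    ‖Ψ (exp (y * I)) - p‖ ≤ (1 + 2 * M) * R := by
  have := hM.one_le
  calc ‖Ψ (exp (y * I)) - p‖
      ≤ ‖Ψ (exp (y * I)) - Ψ (exp (y₁ * I))‖ + ‖Ψ (exp (y₁ * I)) - p‖ :=
        norm_sub_le_norm_sub_add_norm_sub _ _ _
    _ ≤ M * ‖Ψ (exp (y₁ * I)) - Ψ (exp (y₂ * I))‖ + R :=
        add_le_add (hM.norm_sub_le y₁ y₂ y hπ hy) h₁
    _ ≤ M * (R + R) + R := by
        gcongr
        refine (norm_sub_le_norm_sub_add_norm_sub _ p _).trans (add_le_add h₁ ?_)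
        rwa [norm_sub_rev]
    _ = (1 + 2 * M) * R := by ring

lemma logCoord_zero_add_mul_I (Ψ : ℂ → ℂ) (y : ℝ) :
    logCoord Ψ ((0 : ℝ) + y * I) = Ψ (exp (y * I)) := by
  rw [logCoord, ofReal_zero, zero_add]

namespace IsExtParam

variable {Ψ : ℂ → ℂ} (h : IsExtParam Ψ)
include h

lemma continuousOn_logCoord_horizontal (l y : ℝ) :
    ContinuousOn (fun x : ℝ => logCoord Ψ (x + y * I)) (Icc 0 l) :=
  h.continuousOn_logCoord.comp (f := fun x : ℝ => (x + y * I : ℂ)) (by fun_prop) fun x hx => by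
    rw [mem_ofPred_eq, re_add_mul_I]
    exact hx.1

theorem exists_horizontal_segment_norm_sub_le {l a b r : ℝ} {p : ℂ} (hl : 0 < l)
    (hab : l ≤ b - a) (hπ : b - a ≤ 2 * π) (hr : 0 < r)
    (hp : ∀ y ∈ Ioo a b, ∃ x ∈ Icc 0 l, ‖logCoord Ψ (x + y * I) - p‖ ≤ r) :
    ∃ y ∈ Ioo a b, ∀ x ∈ Icc 0 l, ‖logCoord Ψ (x + y * I) - p‖ ≤ Real.exp 8 * r := by
  by_contra! hcon
  -- The factor `2`, of logarithm less than `1`, makes room to move the crossing off the boundary.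
  have h2 : 2 < Real.exp 8 := by linarith [Real.add_one_le_exp 8]
  have key := sub_mul_log_div_le_of_crossing (f := logCoord Ψ) (p := p) (x₀ := 0) (x₁ := l)
    (r₁ := 2 * r) (r₂ := Real.exp 8 * r) hl (sub_pos.1 (hl.trans_le hab)) (by positivity)
    (by gcongr) (h.differentiableOn_logCoord.mono fun _ hw => hw.1.1)
    ((h.injOn_logCoord hπ).mono (inter_subset_inter_left _ fun _ hw => hw.1.le)) fun y hy => ?_
  · rw [mul_div_mul_right _ _ hr.ne', Real.log_div (Real.exp_pos 8).ne' two_ne_zero,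
      Real.log_exp] at key
    nlinarith [Real.log_two_lt_d9, Real.pi_lt_d2]
  · have hcont := ((h.continuousOn_logCoord_horizontal l y).sub
      (continuousOn_const (c := p))).norm
    obtain ⟨x, hx, hxr⟩ := hp y hy
    obtain ⟨s, hs, hsr⟩ := exists_mem_Ioc_of_continuousOn_Icc hl hcont hx
      (isOpen_Iio (a := 2 * r)) (hxr.trans_lt (by linarith))
    obtain ⟨x', hx', hxr'⟩ := hcon y hy
    obtain ⟨s', hs', hsr'⟩ := exists_mem_Ioc_of_continuousOn_Icc hl hcont hx' isOpen_Ioi hxr'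
    refine ⟨s, Ioc_subset_Icc_self hs, s', Ioc_subset_Icc_self hs', fun u hu => ?_,
      hsr.le, hsr'.le⟩
    refine (h.hasDerivAt_logCoord ?_).differentiableAt
    rw [re_add_mul_I]
    exact (lt_min hs.1 hs'.1).trans_le hu.1

lemma norm_logCoord_sub_le_of_re_eq {l θ y : ℝ} (hl : 0 < l) (hlπ : l ≤ π) (hy : |y - θ| ≤ 2 * l) :
    ‖logCoord Ψ (l + y * I) - logCoord Ψ (l + θ * I)‖ ≤
      2 * harnackConst ^ 4 * (l * ‖deriv (logCoord Ψ) (l + θ * I)‖) := by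
  have hdist : dist (l + θ * I : ℂ) (l + y * I) ≤ 2 * l := by
    rwa [dist_add_mul_I_of_re_eq, abs_sub_comm]
  have := harnackConst_pos
  calc ‖logCoord Ψ (l + y * I) - logCoord Ψ (l + θ * I)‖
      ≤ harnackConst ^ 4 * ‖deriv (logCoord Ψ) (l + θ * I)‖ *
          dist (l + θ * I : ℂ) (l + y * I) :=
        h.norm_logCoord_sub_le hl hlπ 4 (re_add_mul_I l θ).ge (re_add_mul_I l y).ge
          (hdist.trans_eq (by push_cast; ring))
    _ ≤ harnackConst ^ 4 * ‖deriv (logCoord Ψ) (l + θ * I)‖ * (2 * l) := by gcongr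
    _ = 2 * harnackConst ^ 4 * (l * ‖deriv (logCoord Ψ) (l + θ * I)‖) := by ring

lemma exists_horizontal_segment_norm_sub_right_le {l θ a : ℝ} (hl : 0 < l) (hlπ : l ≤ π)
    (ha : θ - 2 * l ≤ a) (ha' : a ≤ θ + l) : ∃ y ∈ Ioo a (a + l), ∀ x ∈ Icc 0 l,
      ‖logCoord Ψ (x + y * I) - logCoord Ψ (l + θ * I)‖ ≤
        Real.exp 8 * (2 * harnackConst ^ 4 * (l * ‖deriv (logCoord Ψ) (l + θ * I)‖)) := by
  have hA := harnackConst_pos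
  have hderiv : 0 < ‖deriv (logCoord Ψ) (l + θ * I)‖ :=
    norm_pos_iff.2 (h.deriv_logCoord_ne_zero (by rwa [re_add_mul_I]))
  refine h.exists_horizontal_segment_norm_sub_le hl (by linarith) (by linarith [Real.pi_pos])
    (by positivity) fun y hy => ⟨l, right_mem_Icc.2 hl.le, ?_⟩
  refine h.norm_logCoord_sub_le_of_re_eq hl hlπ ?_
  rw [abs_le]
  constructor <;> linarith [hy.1, hy.2]

theorem exists_norm_logCoord_sub_le_of_mem_rect {M : ℝ} (hM : HasBoundedTurningParam Ψ M) :
    ∃ C > 0, ∀ l θ : ℝ, 0 < l → l ≤ 1 / 2 → ∀ w ∈ Icc 0 l ×ℂ Icc (θ - l) (θ + l),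
      ‖logCoord Ψ w - logCoord Ψ (l + θ * I)‖ ≤
        C * (l * ‖deriv (logCoord Ψ) (l + θ * I)‖) := by
  have hA := harnackConst_pos
  have hM1 := hM.one_le
  refine ⟨(1 + 2 * M) * (Real.exp 8 * (2 * harnackConst ^ 4)), by positivity,
    fun l θ hl hl' w hw => ?_⟩
  have hπ := Real.pi_gt_three
  obtain ⟨y₁, hy₁, hbot⟩ := h.exists_horizontal_segment_norm_sub_right_le (θ := θ)
    (a := θ - 2 * l) hl (by linarith) le_rfl (by linarith)
  obtain ⟨y₂, hy₂, htop⟩ := h.exists_horizontal_segment_norm_sub_right_le (θ := θ)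
    (a := θ + l) hl (by linarith) (by linarith) le_rfl
  have h12 : y₁ < y₂ := by linarith [hy₁.2, hy₂.1]
  rw [mul_assoc, mul_assoc]
  set p := logCoord Ψ (l + θ * I)
  set r := 2 * harnackConst ^ 4 * (l * ‖deriv (logCoord Ψ) (l + θ * I)‖)
  have hr0 : 0 ≤ r := by positivity
  have hend : ∀ y : ℝ, (∀ x ∈ Icc 0 l, ‖logCoord Ψ (x + y * I) - p‖ ≤ Real.exp 8 * r) →
      ‖Ψ (exp (y * I)) - p‖ ≤ Real.exp 8 * r := fun y hy => by
    have := hy 0 (left_mem_Icc.2 hl.le)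
    rwa [logCoord_zero_add_mul_I] at this
  have hleR : Real.exp 8 * r ≤ (1 + 2 * M) * (Real.exp 8 * r) :=
    le_mul_of_one_le_left (by positivity) (by linarith)
  have hrR : r ≤ Real.exp 8 * r := le_mul_of_one_le_left hr0 (Real.one_le_exp (by norm_num))
  refine norm_le_of_forall_side_norm_le (f := fun w => logCoord Ψ w - p) hl h12
    (DiffContOnCl.sub_const ⟨h.differentiableOn_logCoord.mono fun _ hv => hv.1.1, ?_⟩ p)
    (fun x hx => (hbot x hx).trans hleR) (fun x hx => (htop x hx).trans hleR)
    (fun y hy => ?_) (fun y hy => ?_)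
    ⟨hw.1, ⟨by linarith [hw.2.1, hy₁.2], by linarith [hw.2.2, hy₂.1]⟩⟩
  · rw [closure_reProdIm, closure_Ioo hl.ne]
    exact h.continuousOn_logCoord.mono fun v hv => hv.1.1
  · rw [logCoord_zero_add_mul_I]
    exact hM.norm_sub_le_of_endpoints (by linarith [hy₁.1, hy₂.2]) hy (hend y₁ hbot) (hend y₂ htop)
  · refine ((h.norm_logCoord_sub_le_of_re_eq hl (by linarith) ?_).trans hrR).trans hleR
    rw [abs_le]
    constructor <;> linarith [hy₁.1, hy₂.2, hy.1, hy.2]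

end IsExtParam

/-! ### Weak quasisymmetry -/

/-- `g` is weakly quasisymmetric on `S`: if `x₂` is at most `c` times as far from `x₁` as `x₃` is,
then `g x₂` is at most `H` times as far from `g x₁` as `g x₃` is. -/
def WeakQuasisymmOn {X Y : Type*} [PseudoMetricSpace X] [PseudoMetricSpace Y] (g : X → Y)
    (S : Set X) (c H : ℝ) : Prop :=
  ∀ ⦃x₁⦄, x₁ ∈ S → ∀ ⦃x₂⦄, x₂ ∈ S → ∀ ⦃x₃⦄, x₃ ∈ S →
    dist x₁ x₂ ≤ c * dist x₁ x₃ → dist (g x₁) (g x₂) ≤ H * dist (g x₁) (g x₃)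

/-- Every circle centred on `S` meets `S`. In the power estimates this replaces the uniform
perfectness of the classical theory of quasisymmetric maps. -/
def MeetsCircles {X : Type*} [PseudoMetricSpace X] (S : Set X) : Prop :=
  ∀ x ∈ S, ∀ r : ℝ, 0 ≤ r → ∃ w ∈ S, dist x w = r

lemma meetsCircles_setOf_le_norm {E : Type*} [NormedAddCommGroup E] [NormedSpace ℝ E] {r₀ : ℝ}
    (hr₀ : 0 < r₀) : MeetsCircles {x : E | r₀ ≤ ‖x‖} := by
  intro x hx r hr
  have hx0 : 0 < ‖x‖ := hr₀.trans_le hx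
  have hrx : 0 ≤ r / ‖x‖ := by positivity
  refine ⟨x + (r / ‖x‖) • x, ?_, ?_⟩
  · have hsum : x + (r / ‖x‖) • x = (1 + r / ‖x‖) • x := by rw [add_smul, one_smul]
    rw [mem_ofPred_eq, hsum, norm_smul, Real.norm_of_nonneg (by positivity)]
    exact le_trans hx (le_mul_of_one_le_left hx0.le (le_add_of_nonneg_right hrx))
  · rw [dist_self_add_right, norm_smul, Real.norm_of_nonneg hrx, div_mul_cancel₀ _ hx0.ne']

lemma exists_le_two_pow_and_pow_le_rpow {H R α : ℝ} (hH : 0 ≤ H) (hR : 1 ≤ R)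
    (hα : Real.logb 2 (1 + H) ≤ α) :
    ∃ n : ℕ, R ≤ 2 ^ n ∧ (1 + H) ^ n ≤ (1 + H) * R ^ α := by
  have hR0 : 0 < R := by linarith
  refine ⟨⌈Real.logb 2 R⌉₊, ?_, ?_⟩
  · rw [← Real.rpow_natCast, ← Real.logb_le_iff_le_rpow one_lt_two hR0]
    exact Nat.le_ceil _
  · calc (1 + H) ^ ⌈Real.logb 2 R⌉₊ = (1 + H) ^ (⌈Real.logb 2 R⌉₊ : ℝ) :=
          (Real.rpow_natCast _ _).symm
      _ ≤ (1 + H) ^ (Real.logb 2 R + 1) :=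
          Real.rpow_le_rpow_of_exponent_le (by linarith)
            (Nat.ceil_lt_add_one (Real.logb_nonneg one_lt_two hR)).le
      _ = (1 + H) * (1 + H) ^ Real.logb 2 R := by
          rw [Real.rpow_add (by linarith), Real.rpow_one, mul_comm]
      _ = (1 + H) * R ^ Real.logb 2 (1 + H) := by
          rw [Real.rpow_def_of_pos (by linarith), Real.rpow_def_of_pos hR0, Real.logb, Real.logb,
            mul_div_left_comm]
      _ ≤ (1 + H) * R ^ α := by gcongr

lemma exists_forall_exists_dist_lt (F : Type*) [NormedAddCommGroup F] [NormedSpace ℝ F]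
    [ProperSpace F] (R : ℝ) {ε : ℝ} (hε : 0 < ε) :
    ∃ N : ℕ, ∀ (p : F) (r : ℝ) (u : ℕ → F), 0 < r → (∀ k ≤ N, dist (u k) p ≤ R * r) →
      ∃ j k, j < k ∧ k ≤ N ∧ dist (u j) (u k) < ε * r := by
  obtain ⟨T, -, hT, hcover⟩ := finite_cover_balls_of_compact
    (isCompact_closedBall (0 : F) R) (half_pos hε)
  refine ⟨hT.toFinset.card, fun p r u hr hu => ?_⟩
  have hnear : ∀ k ∈ Finset.range (hT.toFinset.card + 1), ∃ v ∈ hT.toFinset,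
      dist (r⁻¹ • (u k - p)) v < ε / 2 := by
    intro k hk
    have hmem : r⁻¹ • (u k - p) ∈ closedBall (0 : F) R := by
      rw [mem_closedBall_zero_iff, norm_smul, Real.norm_of_nonneg (by positivity),
        inv_mul_le_iff₀ hr, ← dist_eq_norm, mul_comm]
      exact hu k (Finset.mem_range_succ_iff.1 hk)
    obtain ⟨v, hv, hv'⟩ := mem_iUnion₂.1 (hcover hmem)
    exact ⟨v, hT.mem_toFinset.2 hv, hv'⟩
  choose! v hvT hv using hnear
  obtain ⟨j, hj, k, hk, hjk, hvv⟩ := Finset.exists_ne_map_eq_of_card_lt_of_maps_to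
    (by rw [Finset.card_range]; exact Nat.lt_succ_self _) hvT
  have hlt : dist (u j) (u k) < ε * r := by
    have h := dist_triangle_right (r⁻¹ • (u j - p)) (r⁻¹ • (u k - p)) (v j)
    rw [dist_smul₀, dist_sub_right, Real.norm_of_nonneg (by positivity)] at h
    rw [← div_lt_iff₀ hr, div_eq_inv_mul]
    have := hv k hk
    rw [← hvv] at this
    linarith [hv j hj]
  rcases hjk.lt_or_gt with hjk | hjk
  · exact ⟨j, k, hjk, Finset.mem_range_succ_iff.1 hk, hlt⟩
  · exact ⟨k, j, hjk, Finset.mem_range_succ_iff.1 hj, by rwa [dist_comm]⟩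

namespace WeakQuasisymmOn

section Power

variable {X Y : Type*} [PseudoMetricSpace X] [PseudoMetricSpace Y] {g : X → Y} {S : Set X} {H : ℝ}
  (hg : WeakQuasisymmOn g S 3 H) (hH : 0 ≤ H) (hS : MeetsCircles S) {x₁ x₂ x₃ : X} (h₁ : x₁ ∈ S)
  (h₂ : x₂ ∈ S) (h₃ : x₃ ∈ S)
include hg hH h₁ h₂ h₃

include hS in
lemma dist_le_pow (n : ℕ) (hle : dist x₁ x₃ ≤ 2 ^ n * dist x₁ x₂) :
    dist (g x₁) (g x₃) ≤ H * (1 + H) ^ n * dist (g x₁) (g x₂) := by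
  induction n generalizing x₃ with
  | zero =>
    rw [pow_zero, one_mul] at hle
    rw [pow_zero, mul_one]
    exact hg h₁ h₃ h₂ (by linarith [dist_nonneg (x := x₁) (y := x₂)])
  | succ n ih =>
    -- A point of `S` half-way between `x₁` and `x₃` in distance from `x₁`.
    obtain ⟨w, hw, hwd⟩ := hS x₁ h₁ (dist x₁ x₃ / 2) (by positivity)
    have hw₂ := ih hw (by rw [pow_succ] at hle; linarith)
    have hw₃ : dist (g w) (g x₃) ≤ H * dist (g w) (g x₁) := by
      refine hg hw h₃ h₁ ?_
      have := dist_triangle w x₁ x₃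
      rw [dist_comm w x₁] at this ⊢
      linarith
    rw [dist_comm (g w) (g x₁)] at hw₃
    calc dist (g x₁) (g x₃) ≤ (1 + H) * dist (g x₁) (g w) := by
          linarith [dist_triangle (g x₁) (g w) (g x₃)]
      _ ≤ (1 + H) * (H * (1 + H) ^ n * dist (g x₁) (g x₂)) := by gcongr
      _ = H * (1 + H) ^ (n + 1) * dist (g x₁) (g x₂) := by ring

include hS in
lemma dist_le_rpow {α : ℝ} (hα : Real.logb 2 (1 + H) ≤ α) (hpos : 0 < dist x₁ x₂)
    (hle : dist x₁ x₂ ≤ dist x₁ x₃) :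
    dist (g x₁) (g x₃) ≤
      H * (1 + H) * (dist x₁ x₃ / dist x₁ x₂) ^ α * dist (g x₁) (g x₂) := by
  obtain ⟨n, hn, hpow⟩ := exists_le_two_pow_and_pow_le_rpow hH ((one_le_div hpos).2 hle) hα
  calc dist (g x₁) (g x₃) ≤ H * (1 + H) ^ n * dist (g x₁) (g x₂) :=
        hg.dist_le_pow hH hS h₁ h₂ h₃ n ((div_le_iff₀ hpos).1 hn)
    _ ≤ H * ((1 + H) * (dist x₁ x₃ / dist x₁ x₂) ^ α) * dist (g x₁) (g x₂) := by gcongr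
    _ = H * (1 + H) * (dist x₁ x₃ / dist x₁ x₂) ^ α * dist (g x₁) (g x₂) := by ring

include hS in
lemma div_dist_le_rpow {α K : ℝ} (hα : Real.logb 2 (1 + H) ≤ α) (hα0 : 0 ≤ α) (hK : 0 ≤ K)
    (hpos : 0 < dist x₁ x₂) (hle : dist x₁ x₂ ≤ K * dist x₁ x₃) :
    dist (g x₁) (g x₃) / dist (g x₁) (g x₂) ≤
      H * (1 + H) * (1 + K ^ α) * (dist x₁ x₃ / dist x₁ x₂) ^ α := by
  refine div_le_of_le_mul₀ dist_nonneg (by positivity) ?_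
  have hKα : 0 ≤ K ^ α := by positivity
  rcases le_total (dist x₁ x₂) (dist x₁ x₃) with hcase | hcase
  · refine (hg.dist_le_rpow hH hS h₁ h₂ h₃ hα hpos hcase).trans ?_
    gcongr ?_ * _ * _
    exact le_mul_of_one_le_right (by positivity) (by linarith)
  · have hone : 1 ≤ K ^ α * (dist x₁ x₃ / dist x₁ x₂) ^ α := by
      rw [← Real.mul_rpow hK (by positivity), mul_div_assoc']
      exact Real.one_le_rpow ((one_le_div hpos).2 hle) hα0
    refine (hg h₁ h₃ h₂ (by linarith)).trans ?_
    gcongr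
    calc H ≤ H * (1 + H) * (K ^ α * (dist x₁ x₃ / dist x₁ x₂) ^ α) := by
          rw [mul_assoc]
          exact le_mul_of_one_le_right hH (one_le_mul_of_one_le_of_one_le (by linarith) hone)
      _ ≤ H * (1 + H) * ((1 + K ^ α) * (dist x₁ x₃ / dist x₁ x₂) ^ α) := by gcongr; linarith
      _ = H * (1 + H) * (1 + K ^ α) * (dist x₁ x₃ / dist x₁ x₂) ^ α := by ring

end Power

section Inverse

variable {X F : Type*} [MetricSpace X] [NormedAddCommGroup F] {g : X → F} {S : Set X} {H : ℝ}
  (hg : WeakQuasisymmOn g S 3 H)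

include hg in
lemma dist_le_sq_mul_dist (hH : 0 ≤ H) {x₁ x₂ x₃ x₄ : X} (h₁ : x₁ ∈ S) (h₂ : x₂ ∈ S)
    (h₃ : x₃ ∈ S) (h₄ : x₄ ∈ S) (h12 : dist x₁ x₂ ≤ dist x₁ x₃)
    (h13 : 4 * dist x₁ x₃ ≤ dist x₁ x₄) :
    dist (g x₁) (g x₂) ≤ H ^ 2 * dist (g x₃) (g x₄) := by
  have hle₁ : dist (g x₁) (g x₂) ≤ H * dist (g x₁) (g x₃) :=
    hg h₁ h₂ h₃ (by linarith [dist_nonneg (x := x₁) (y := x₃)])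
  have hle₂ : dist (g x₃) (g x₁) ≤ H * dist (g x₃) (g x₄) := by
    refine hg h₃ h₁ h₄ ?_
    have := dist_triangle x₁ x₃ x₄
    rw [dist_comm x₃ x₁]
    linarith [dist_nonneg (x := x₁) (y := x₃)]
  rw [dist_comm] at hle₂
  calc dist (g x₁) (g x₂) ≤ H * dist (g x₁) (g x₃) := hle₁
    _ ≤ H * (H * dist (g x₃) (g x₄)) := by gcongr
    _ = H ^ 2 * dist (g x₃) (g x₄) := by ring

variable [NormedSpace ℝ F] [ProperSpace F]

include hg in
theorem exists_dist_le_of_dist_image_le (hH : 0 < H) (hS : MeetsCircles S) (hinj : InjOn g S)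
    (c : ℝ) : ∃ K > 0, ∀ ⦃x₁⦄, x₁ ∈ S → ∀ ⦃x₂⦄, x₂ ∈ S → ∀ ⦃x₃⦄, x₃ ∈ S →
      dist (g x₁) (g x₂) ≤ c * dist (g x₁) (g x₃) → dist x₁ x₂ ≤ K * dist x₁ x₃ := by
  obtain ⟨N, hN⟩ := exists_forall_exists_dist_lt F (H * c) (ε := (H ^ 2)⁻¹) (by positivity)
  refine ⟨4 ^ N, by positivity, fun x₁ h₁ x₂ h₂ x₃ h₃ hle => ?_⟩
  rcases (dist_nonneg : 0 ≤ dist x₁ x₃).eq_or_lt with hρ | hρ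
  · rw [← dist_eq_zero.1 hρ.symm, dist_self, mul_zero] at hle ⊢
    exact (dist_eq_zero.2 (hinj h₁ h₂ (dist_le_zero.1 hle))).le
  -- If `dist x₁ x₂` were large, points of `S` at the distances `4 ^ k * dist x₁ x₃` from `x₁` would
  -- have separated images in a fixed ball, too many to fit.
  by_contra! hgt
  choose w hwS hwd using fun k : ℕ => hS x₁ h₁ (4 ^ k * dist x₁ x₃) (by positivity)
  obtain ⟨j, k, hjk, -, hlt⟩ := hN (g x₁) (dist (g x₁) (g x₃)) (fun k => g (w k))
    (dist_pos.2 fun h => dist_pos.1 hρ (hinj h₁ h₃ h)) fun k hk => by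
      rw [dist_comm, mul_assoc]
      have hk4 : (4 : ℝ) ^ k * dist x₁ x₃ ≤ 4 ^ N * dist x₁ x₃ := by gcongr; norm_num
      refine (hg h₁ (hwS k) h₂ ?_).trans (mul_le_mul_of_nonneg_left hle hH.le)
      rw [hwd]
      linarith [dist_nonneg (x := x₁) (y := x₂)]
  rw [inv_mul_eq_div, lt_div_iff₀ (by positivity), mul_comm] at hlt
  refine hlt.not_ge (hg.dist_le_sq_mul_dist hH.le h₁ h₃ (hwS j) (hwS k) ?_ ?_)
  · rw [hwd]
    exact le_mul_of_one_le_left hρ.le (one_le_pow₀ (by norm_num))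
  · rw [hwd, hwd, ← mul_assoc, ← pow_succ']
    gcongr
    · norm_num
    · exact hjk

include hg in
lemma exists_weakQuasisymmOn_of_invOn (hH : 0 < H) (hS : MeetsCircles S) {φ : F → X} {E : Set F}
    (hmaps : MapsTo φ E S) (hinv : InvOn g φ E S) (c : ℝ) : ∃ K > 0, WeakQuasisymmOn φ E c K := by
  obtain ⟨K, hK, hdist⟩ := hg.exists_dist_le_of_dist_image_le hH hS hinv.2.injOn c
  refine ⟨K, hK, fun z₁ h₁ z₂ h₂ z₃ h₃ hle => hdist (hmaps h₁) (hmaps h₂) (hmaps h₃) ?_⟩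
  rwa [hinv.1 h₁, hinv.1 h₂, hinv.1 h₃]

include hg in
theorem exists_rpow_distortion (hH : 0 < H) (hS : MeetsCircles S) {φ : F → X} {E : Set F}
    (hE : MeetsCircles E) (hmaps : MapsTo φ E S) (hinv : InvOn g φ E S) :
    ∃ α : ℝ, 1 ≤ α ∧ ∀ c > (0 : ℝ), ∃ C > (0 : ℝ), ∀ z₁ ∈ E, ∀ z₂ ∈ E, ∀ z₃ ∈ E, z₁ ≠ z₂ →
      dist z₁ z₂ ≤ c * dist z₁ z₃ →
        (dist (φ z₁) (φ z₃) / dist (φ z₁) (φ z₂)) ^ (1 / α) ≤ C * (dist z₁ z₃ / dist z₁ z₂) ∧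
        dist z₁ z₃ / dist z₁ z₂ ≤ C * (dist (φ z₁) (φ z₃) / dist (φ z₁) (φ z₂)) ^ α := by
  obtain ⟨H', hH', hφ⟩ := hg.exists_weakQuasisymmOn_of_invOn hH hS hmaps hinv 3
  set α := max 1 (max (Real.logb 2 (1 + H)) (Real.logb 2 (1 + H')))
  have hα1 : 1 ≤ α := le_max_left _ _
  have hαH : Real.logb 2 (1 + H) ≤ α := (le_max_left _ _).trans (le_max_right _ _)
  have hαH' : Real.logb 2 (1 + H') ≤ α := (le_max_right _ _).trans (le_max_right _ _)
  have hα0 : 0 < α := by linarith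
  refine ⟨α, hα1, fun c hc => ?_⟩
  obtain ⟨K, hK, hφc⟩ := hg.exists_weakQuasisymmOn_of_invOn hH hS hmaps hinv c
  refine ⟨max ((H' * (1 + H') * (1 + c ^ α)) ^ (1 / α)) (H * (1 + H) * (1 + K ^ α)),
    lt_max_of_lt_right (by positivity), fun z₁ h₁ z₂ h₂ z₃ h₃ hne hle => ⟨?_, ?_⟩⟩
  · have hφle := hφ.div_dist_le_rpow hH'.le hE h₁ h₂ h₃ hαH' hα0.le hc.le (dist_pos.2 hne) hle
    calc (dist (φ z₁) (φ z₃) / dist (φ z₁) (φ z₂)) ^ (1 / α)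
        ≤ (H' * (1 + H') * (1 + c ^ α) * (dist z₁ z₃ / dist z₁ z₂) ^ α) ^ (1 / α) := by gcongr
      _ = (H' * (1 + H') * (1 + c ^ α)) ^ (1 / α) * (dist z₁ z₃ / dist z₁ z₂) := by
          rw [Real.mul_rpow (by positivity) (by positivity), ← Real.rpow_mul (by positivity),
            mul_one_div_cancel hα0.ne', Real.rpow_one]
      _ ≤ _ := by gcongr; exact le_max_left _ _
  · have hgle := hg.div_dist_le_rpow hH.le hS (hmaps h₁) (hmaps h₂) (hmaps h₃) hαH hα0.le hK.le
      (dist_pos.2 fun h => hne (hinv.1.injOn h₁ h₂ h)) (hφc h₁ h₂ h₃ hle)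
    rw [hinv.1 h₁, hinv.1 h₂, hinv.1 h₃] at hgle
    exact hgle.trans (by gcongr; exact le_max_right _ _)

end Inverse

end WeakQuasisymmOn

/-! ### Weak quasisymmetry of the exterior parametrization -/

section Coordinates

open InnerProductGeometry
open NormedSpace (normalize norm_smul_normalize norm_normalize_eq_one_iff)

lemma norm_normalize_sub_normalize_le {E : Type*} [NormedAddCommGroup E] [NormedSpace ℝ E]
    {x y : E} (hx : x ≠ 0) (hy : 1 ≤ ‖y‖) : ‖normalize x - normalize y‖ ≤ 2 * ‖x - y‖ := by
  have hsub : ‖y‖ • (normalize x - normalize y) = (x - y) + (‖y‖ - ‖x‖) • normalize x := by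
    rw [smul_sub, sub_smul, norm_smul_normalize, norm_smul_normalize]
    abel
  calc ‖normalize x - normalize y‖ ≤ ‖y‖ * ‖normalize x - normalize y‖ :=
        le_mul_of_one_le_left (norm_nonneg _) hy
    _ = ‖(x - y) + (‖y‖ - ‖x‖) • normalize x‖ := by rw [← hsub, norm_smul, norm_norm]
    _ ≤ ‖x - y‖ + |‖y‖ - ‖x‖| := by
        refine (norm_add_le _ _).trans_eq ?_
        rw [norm_smul, norm_normalize_eq_one_iff.2 hx, mul_one, Real.norm_eq_abs]
    _ ≤ 2 * ‖x - y‖ := by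
        linarith [(abs_norm_sub_norm_le y x).trans_eq (norm_sub_rev y x)]

lemma dist_normalize {E : Type*} [NormedAddCommGroup E] [NormedSpace ℝ E] {x : E} (hx : 1 ≤ ‖x‖) :
    dist x (normalize x) = ‖x‖ - 1 := by
  have hsub : x - normalize x = (‖x‖ - 1) • normalize x := by
    rw [sub_smul, one_smul, norm_smul_normalize]
  rw [dist_eq_norm, hsub, norm_smul, norm_normalize_eq_one_iff.2 (norm_pos_iff.1 (by linarith)),
    mul_one, Real.norm_of_nonneg (by linarith)]

lemma exp_log_norm_add_arg_mul_I {z : ℂ} (hz : z ≠ 0) : exp (Real.log ‖z‖ + arg z * I) = z := by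
  rw [exp_add, ← ofReal_exp, Real.exp_log (norm_pos_iff.2 hz), norm_mul_exp_arg_mul_I]

lemma exists_exp_eq_and_exp_eq {t τ : ℂ} (ht : 1 ≤ ‖t‖) (hτ : 1 ≤ ‖τ‖) :
    ∃ φ θ : ℝ, exp (Real.log ‖t‖ + φ * I) = t ∧ exp (Real.log ‖τ‖ + θ * I) = τ ∧
      |φ - θ| ≤ 4 * dist t τ ∧ |φ - θ| ≤ π := by
  have ht0 : t ≠ 0 := norm_pos_iff.1 (by linarith)
  have hτ0 : τ ≠ 0 := norm_pos_iff.1 (by linarith)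
  refine ⟨arg τ + arg (t / τ), arg τ, ?_, exp_log_norm_add_arg_mul_I hτ0, ?_, ?_⟩
  · have hsplit : (Real.log ‖t‖ + (arg τ + arg (t / τ) : ℝ) * I : ℂ) =
        (Real.log ‖τ‖ + arg τ * I) + (Real.log ‖t / τ‖ + arg (t / τ) * I) := by
      rw [norm_div, Real.log_div (by linarith) (by linarith)]
      push_cast
      ring
    rw [hsplit, exp_add, exp_log_norm_add_arg_mul_I hτ0,
      exp_log_norm_add_arg_mul_I (div_ne_zero ht0 hτ0), mul_div_cancel₀ _ hτ0]
  · rw [add_sub_cancel_left, ← angle_eq_abs_arg ht0 hτ0,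
      ← angle_smul_left_of_pos t τ (inv_pos.2 (norm_pos_iff.2 ht0)),
      ← angle_smul_right_of_pos _ τ (inv_pos.2 (norm_pos_iff.2 hτ0))]
    refine (angle_le_mul_norm_sub (norm_normalize_eq_one_iff.2 ht0)
      (norm_normalize_eq_one_iff.2 hτ0)).trans ?_
    have hnorm := norm_normalize_sub_normalize_le ht0 hτ
    rw [dist_eq_norm]
    nlinarith [Real.pi_le_four, Real.pi_pos, norm_nonneg (t - τ)]
  · rw [add_sub_cancel_left]
    exact abs_arg_le_pi _

lemma half_sub_one_le_log {x : ℝ} (hx : 1 ≤ x) (hx2 : x ≤ 2) : (x - 1) / 2 ≤ Real.log x := by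
  have hx0 : 0 < x := by linarith
  refine le_trans ?_ (Real.one_sub_inv_le_log_of_pos hx0)
  rw [← one_div, one_sub_div hx0.ne']
  exact div_le_div_of_nonneg_left (by linarith) hx0 hx2

lemma dist_exp_mul_I_le (y₁ y₂ : ℝ) : dist (exp (y₁ * I)) (exp (y₂ * I)) ≤ |y₁ - y₂| := by
  have hfactor : exp (y₁ * I) - exp (y₂ * I) = exp (y₂ * I) * (exp (I * (y₁ - y₂ : ℝ)) - 1) := by
    rw [mul_sub, ← exp_add, mul_one]
    push_cast
    ring_nf
  rw [dist_eq_norm, hfactor, norm_mul, norm_exp_ofReal_mul_I, one_mul]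
  exact Real.norm_exp_I_mul_ofReal_sub_one_le

lemma dist_exp_mul_I_exp_add_mul_I {x : ℝ} (hx : 0 ≤ x) (y : ℝ) :
    dist (exp (y * I)) (exp (x + y * I)) = Real.exp x - 1 := by
  have hfactor : exp (x + y * I) - exp (y * I) = ((Real.exp x - 1 : ℝ) : ℂ) * exp (y * I) := by
    rw [exp_add]
    push_cast
    ring
  rw [dist_comm, dist_eq_norm, hfactor, norm_mul, norm_exp_ofReal_mul_I, mul_one, norm_real,
    Real.norm_of_nonneg (by linarith [Real.one_le_exp hx])]

end Coordinates

/-- Upper distortion bound with constants `K` and `C`: the image under `Ψ` of a disk of radius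
comparable to the distance from its centre `τ` to the unit circle, and possibly meeting it, has
diameter at most comparable to that of a disk on which `Ψ` is close to affine. -/
def HasDistortionBound (Ψ : ℂ → ℂ) (K C : ℝ) : Prop :=
  ∀ ⦃τ t : ℂ⦄, 1 < ‖τ‖ → 1 ≤ ‖t‖ → dist t τ ≤ K * (‖τ‖ - 1) →
    dist (Ψ t) (Ψ τ) ≤ C * ((‖τ‖ - 1) * ‖deriv Ψ τ‖)

namespace IsExtParam

variable {Ψ : ℂ → ℂ} (h : IsExtParam Ψ)
include h

lemma mul_norm_deriv_le {τ t : ℂ} {s : ℝ} (hs : 0 ≤ s) (hsτ : s ≤ ‖τ‖ - 1) (ht : 1 ≤ ‖t‖)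
    (hst : s ≤ dist t τ) : s * ‖deriv Ψ τ‖ ≤ 12 * koebeConst * dist (Ψ t) (Ψ τ) := by
  have := koebeConst_pos
  rcases hs.eq_or_lt with rfl | hs
  · rw [zero_mul]
    positivity
  · rw [dist_eq_norm]
    exact mul_norm_deriv_le_of_le_dist hs (h.differentiableOn.mono (ball_subset_extDisk hsτ))
      (h.injOn.mono (insert_subset ht (ball_subset_one_le_norm hsτ))) (by linarith)

lemma dist_le_of_le_half {τ t : ℂ} {s : ℝ} (hs : 0 < s) (hsτ : s ≤ ‖τ‖ - 1)
    (hst : dist t τ ≤ s / 2) : dist (Ψ t) (Ψ τ) ≤ koebeConst * (s * ‖deriv Ψ τ‖) := by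
  rw [dist_eq_norm]
  exact norm_sub_le_mul_norm_deriv hs (h.differentiableOn.mono (ball_subset_extDisk hsτ))
    (h.injOn.mono (ball_subset_one_le_norm hsτ))
    (h.deriv_ne_zero _ (ball_subset_extDisk hsτ (mem_ball_self hs))) hst

lemma exists_dist_le_of_le_norm_sub_one {ε₀ K : ℝ} (hε₀ : 0 < ε₀) (hK : 0 ≤ K) :
    ∃ C > 0, ∀ τ t : ℂ, ε₀ ≤ ‖τ‖ - 1 → 1 ≤ ‖t‖ → dist t τ ≤ K * (‖τ‖ - 1) →
      dist (Ψ t) (Ψ τ) ≤ C * ((‖τ‖ - 1) * ‖deriv Ψ τ‖) := by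
  obtain ⟨B, hB, hgrowth⟩ := h.growth
  obtain ⟨m, hm, hlower⟩ := h.lower (1 + ε₀) (by linarith)
  refine ⟨B * (2 / ε₀ + 2 + K) / m, by positivity, fun τ t hτ ht htτ => ?_⟩
  have hε : 0 < ‖τ‖ - 1 := hε₀.trans_le hτ
  have htnorm : ‖t‖ ≤ ‖τ‖ + K * (‖τ‖ - 1) := by
    rw [dist_eq_norm] at htτ
    linarith [norm_sub_norm_le t τ]
  have hone : 2 ≤ 2 / ε₀ * (‖τ‖ - 1) := by
    rw [div_mul_eq_mul_div, le_div_iff₀ hε₀]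
    linarith
  calc dist (Ψ t) (Ψ τ) ≤ ‖Ψ t‖ + ‖Ψ τ‖ := dist_le_norm_add_norm _ _
    _ ≤ B * ‖t‖ + B * ‖τ‖ := add_le_add (hgrowth t ht) (hgrowth τ (by linarith))
    _ = B * (‖t‖ + ‖τ‖) := by ring
    _ ≤ B * ((2 / ε₀ + 2 + K) * (‖τ‖ - 1)) := by gcongr; linarith
    _ = B * (2 / ε₀ + 2 + K) / m * ((‖τ‖ - 1) * m) := by field_simp
    _ ≤ B * (2 / ε₀ + 2 + K) / m * ((‖τ‖ - 1) * ‖deriv Ψ τ‖) := by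
        gcongr
        exact hlower τ (by linarith)

lemma mul_norm_deriv_logCoord_le {D ε x : ℝ} (θ : ℝ) (hε : 0 < ε) (hεx : ε / 2 ≤ x)
    (hxD : x ≤ D * ε) (hD : D * ε ≤ 1 / 2) :
    D * ε * ‖deriv (logCoord Ψ) ((D * ε : ℝ) + θ * I)‖ ≤
      2 * D * harnackConst ^ ⌈4 * D⌉₊ * (ε * ‖deriv Ψ (exp (x + θ * I))‖) := by
  have hx : 0 < x := by linarith
  have hD0 : 0 < D := pos_of_mul_pos_left (hx.trans_le hxD) hε.le
  have hA := harnackConst_pos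
  have hdist : dist (x + θ * I : ℂ) ((D * ε : ℝ) + θ * I) ≤ ⌈4 * D⌉₊ * (x / 2) := by
    rw [dist_add_mul_I_of_im_eq, abs_sub_comm, abs_of_nonneg (by linarith)]
    nlinarith [Nat.le_ceil (4 * D)]
  have hexp : Real.exp x ≤ 2 := by
    rw [← Real.le_log_iff_exp_le two_pos]
    linarith [Real.log_two_gt_d9]
  calc D * ε * ‖deriv (logCoord Ψ) ((D * ε : ℝ) + θ * I)‖
      ≤ D * ε * (harnackConst ^ ⌈4 * D⌉₊ * ‖deriv (logCoord Ψ) (x + θ * I)‖) := by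
        gcongr
        exact h.norm_deriv_logCoord_le hx (by linarith [Real.pi_gt_three]) _
          (re_add_mul_I _ _).ge (hxD.trans_eq (re_add_mul_I _ _).symm) hdist
    _ ≤ D * ε * (harnackConst ^ ⌈4 * D⌉₊ * (‖deriv Ψ (exp (x + θ * I))‖ * 2)) := by
        rw [h.norm_deriv_logCoord (by rwa [re_add_mul_I]), re_add_mul_I]
        gcongr
    _ = 2 * D * harnackConst ^ ⌈4 * D⌉₊ * (ε * ‖deriv Ψ (exp (x + θ * I))‖) := by ring

lemma exists_dist_le_of_norm_sub_one_le {M : ℝ} (hM : HasBoundedTurningParam Ψ M) {K : ℝ}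
    (hK : 0 < K) :
    ∃ C > 0, ∀ τ t : ℂ, 1 < ‖τ‖ → (4 * K + 2) * (‖τ‖ - 1) ≤ 1 / 2 → 1 ≤ ‖t‖ →
      dist t τ ≤ K * (‖τ‖ - 1) → dist (Ψ t) (Ψ τ) ≤ C * ((‖τ‖ - 1) * ‖deriv Ψ τ‖) := by
  obtain ⟨C, hC, hrect⟩ := h.exists_norm_logCoord_sub_le_of_mem_rect hM
  have hA := harnackConst_pos
  set A := 2 * (4 * K + 2) * harnackConst ^ ⌈4 * (4 * K + 2)⌉₊ with hAdef
  refine ⟨2 * (C * A), by positivity, fun τ t hτ hsmall ht htτ => ?_⟩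
  obtain ⟨φ, θ, hφ, hθ, hφθ, -⟩ := exists_exp_eq_and_exp_eq ht hτ.le
  have hε : 0 < ‖τ‖ - 1 := by linarith
  have hKε : 0 < K * (‖τ‖ - 1) := by positivity
  have hlogτ : Real.log ‖τ‖ ≤ ‖τ‖ - 1 := Real.log_le_sub_one_of_pos (by linarith)
  have hlogt : Real.log ‖t‖ ≤ ‖t‖ - 1 := Real.log_le_sub_one_of_pos (by linarith)
  have htnorm : ‖t‖ ≤ ‖τ‖ + K * (‖τ‖ - 1) := by
    rw [dist_eq_norm] at htτ
    linarith [norm_sub_norm_le t τ]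
  have hderiv := h.mul_norm_deriv_logCoord_le (D := 4 * K + 2) θ hε
    (half_sub_one_le_log hτ.le (by linarith)) (by linarith) hsmall
  rw [hθ, ← hAdef] at hderiv
  have hpoint : ∀ x y : ℝ, 0 ≤ x → x ≤ (4 * K + 2) * (‖τ‖ - 1) →
      |y - θ| ≤ (4 * K + 2) * (‖τ‖ - 1) →
      dist (Ψ (exp (x + y * I))) (logCoord Ψ (((4 * K + 2) * (‖τ‖ - 1) : ℝ) + θ * I)) ≤
        C * (A * ((‖τ‖ - 1) * ‖deriv Ψ τ‖)) := fun x y hx hxl hy => by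
    rw [abs_le] at hy
    rw [dist_eq_norm]
    refine (hrect _ θ (by positivity) hsmall (x + y * I) ?_).trans (by gcongr)
    rw [mem_reProdIm, re_add_mul_I, im_add_mul_I]
    exact ⟨⟨hx, hxl⟩, by linarith, by linarith⟩
  have hpt := hpoint _ φ (Real.log_nonneg ht) (by linarith) (by linarith)
  have hpτ := hpoint _ θ (Real.log_nonneg hτ.le) (by linarith)
    (by rw [sub_self, abs_zero]; positivity)
  rw [hφ] at hpt
  rw [hθ] at hpτ
  linarith [dist_triangle_right (Ψ t) (Ψ τ)
    (logCoord Ψ (((4 * K + 2) * (‖τ‖ - 1) : ℝ) + θ * I))]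

theorem exists_hasDistortionBound {M : ℝ} (hM : HasBoundedTurningParam Ψ M) {K : ℝ} (hK : 0 < K) :
    ∃ C > 0, HasDistortionBound Ψ K C := by
  obtain ⟨C₁, hC₁, hnear⟩ := h.exists_dist_le_of_norm_sub_one_le hM hK
  obtain ⟨C₂, -, hfar⟩ := h.exists_dist_le_of_le_norm_sub_one (ε₀ := 1 / 2 / (4 * K + 2))
    (by positivity) hK.le
  refine ⟨max C₁ C₂, lt_max_of_lt_left hC₁, fun τ t hτ ht htτ => ?_⟩
  have : 0 ≤ ‖τ‖ - 1 := by linarith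
  rcases le_total ((4 * K + 2) * (‖τ‖ - 1)) (1 / 2) with hcase | hcase
  · exact (hnear τ t hτ hcase ht htτ).trans (by gcongr; exact le_max_left _ _)
  · refine (hfar τ t ?_ ht htτ).trans (by gcongr; exact le_max_right _ _)
    rwa [div_le_iff₀' (by positivity)]

end IsExtParam

lemma exp_mul_I_ne_exp_mul_I {y₁ y₂ : ℝ} (hy : y₁ < y₂) (hy' : y₂ < y₁ + 2 * π) :
    exp (y₁ * I) ≠ exp (y₂ * I) := fun heq => by
  have := congrArg im <| eq_of_exp_eq_of_abs_im_sub_lt heq <| by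
    rw [im_ofReal_mul, im_ofReal_mul, I_im, mul_one, mul_one, abs_sub_lt_iff]
    constructor <;> linarith
  rw [im_ofReal_mul, im_ofReal_mul, I_im, mul_one, mul_one] at this
  exact hy.ne this

namespace IsExtParam

variable {Ψ : ℂ → ℂ} (h : IsExtParam Ψ)
include h

lemma mul_norm_deriv_logCoord_le_norm_sub {l y y' : ℝ} (hl : 0 < l) (hlπ : l ≤ π)
    (hy : |y' - y| < l) : l * ‖deriv (logCoord Ψ) (l + y * I)‖ ≤
      12 * koebeConst * ‖logCoord Ψ ((0 : ℝ) + y' * I) - logCoord Ψ (l + y * I)‖ := by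
  rw [abs_sub_lt_iff] at hy
  have hball : ball (l + y * I : ℂ) l ⊆ Ici 0 ×ℂ Ioo (y - l) (y + l) := by
    refine (ball_subset_reProdIm _ _).trans (reProdIm_subset_iff.2 (prod_mono ?_ ?_))
    · rw [re_add_mul_I, sub_self]
      exact fun x hx => hx.1.le
    · rw [im_add_mul_I]
  refine mul_norm_deriv_le_of_le_dist hl (h.differentiableOn_logCoord_ball (re_add_mul_I _ _).ge)
    ((h.injOn_logCoord (by linarith)).mono (insert_subset ?_ hball)) ?_
  · rw [mem_reProdIm, re_add_mul_I, im_add_mul_I]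
    exact ⟨self_mem_Ici, by linarith, by linarith⟩
  · rw [dist_eq_norm]
    refine le_trans ?_ (abs_re_le_norm _)
    rw [sub_re, re_add_mul_I, re_add_mul_I, zero_sub, abs_neg, abs_of_pos hl]
    linarith

section Boundary

variable {M : ℝ} (hM : HasBoundedTurningParam Ψ M)
include hM

lemma mul_norm_deriv_logCoord_le_of_boundary {y₁ y₂ : ℝ} (hy : y₁ < y₂) (hyπ : y₂ ≤ y₁ + π) :
    (y₂ - y₁) * ‖deriv (logCoord Ψ) ((y₂ - y₁ : ℝ) + y₁ * I)‖ ≤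
      harnackConst ^ 2 * (12 * koebeConst * (Real.exp 8 * M)) *
        dist (Ψ (exp (y₁ * I))) (Ψ (exp (y₂ * I))) := by
  have hl : 0 < y₂ - y₁ := sub_pos.2 hy
  have hA := harnackConst_pos
  have hk := koebeConst_pos
  have hM₀ : 0 < M := zero_lt_one.trans_le hM.one_le
  have hd : 0 < dist (Ψ (exp (y₁ * I))) (Ψ (exp (y₂ * I))) :=
    dist_pos.2 (h.injOn.ne (norm_exp_ofReal_mul_I y₁).ge (norm_exp_ofReal_mul_I y₂).ge
      (exp_mul_I_ne_exp_mul_I hy (by linarith)))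
  obtain ⟨y, hy', hseg⟩ := h.exists_horizontal_segment_norm_sub_le (p := Ψ (exp (y₁ * I))) hl le_rfl
    (by linarith) (mul_pos hM₀ hd) fun y hy' => ⟨0, left_mem_Icc.2 hl.le, by
      rw [logCoord_zero_add_mul_I, dist_eq_norm]
      exact hM.norm_sub_le y₁ y₂ y hyπ (Ioo_subset_Icc_self hy')⟩
  have hend := hseg (y₂ - y₁) (right_mem_Icc.2 hl.le)
  have hkoebe := h.mul_norm_deriv_logCoord_le_norm_sub (y := y) (y' := y₁) hl (by linarith)
    (by rw [abs_sub_lt_iff]; constructor <;> linarith [hy'.1, hy'.2])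
  rw [logCoord_zero_add_mul_I, norm_sub_rev] at hkoebe
  have hharnack := h.norm_deriv_logCoord_le hl (by linarith) 2 (re_add_mul_I (y₂ - y₁) y).ge
    (re_add_mul_I (y₂ - y₁) y₁).ge (by
      rw [dist_add_mul_I_of_re_eq, abs_of_pos (by linarith [hy'.1])]
      push_cast
      linarith [hy'.2])
  calc (y₂ - y₁) * ‖deriv (logCoord Ψ) ((y₂ - y₁ : ℝ) + y₁ * I)‖
      ≤ (y₂ - y₁) * (harnackConst ^ 2 * ‖deriv (logCoord Ψ) ((y₂ - y₁ : ℝ) + y * I)‖) := by gcongr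
    _ = harnackConst ^ 2 * ((y₂ - y₁) * ‖deriv (logCoord Ψ) ((y₂ - y₁ : ℝ) + y * I)‖) := by ring
    _ ≤ harnackConst ^ 2 * (12 * koebeConst *
          (Real.exp 8 * (M * dist (Ψ (exp (y₁ * I))) (Ψ (exp (y₂ * I)))))) := by
        refine mul_le_mul_of_nonneg_left (hkoebe.trans ?_) (by positivity)
        gcongr
    _ = _ := by ring

lemma mul_norm_deriv_le_of_boundary {y₁ y₂ : ℝ} (hy : y₁ < y₂) (hyπ : y₂ ≤ y₁ + π) :
    (Real.exp (y₂ - y₁) - 1) * ‖deriv Ψ (exp ((y₂ - y₁ : ℝ) + y₁ * I))‖ ≤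
      harnackConst ^ 2 * (12 * koebeConst * (Real.exp 8 * M)) *
        dist (Ψ (exp (y₁ * I))) (Ψ (exp (y₂ * I))) := by
  have hlog := h.mul_norm_deriv_logCoord_le_of_boundary hM hy hyπ
  rw [h.norm_deriv_logCoord (by rw [re_add_mul_I]; exact sub_pos.2 hy), re_add_mul_I] at hlog
  refine le_trans ?_ hlog
  have hexp : Real.exp (y₂ - y₁) - 1 ≤ (y₂ - y₁) * Real.exp (y₂ - y₁) := by
    have hinv : Real.exp (-(y₂ - y₁)) * Real.exp (y₂ - y₁) = 1 := by
      rw [← Real.exp_add, neg_add_cancel, Real.exp_zero]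
    nlinarith [Real.add_one_le_exp (-(y₂ - y₁)), Real.exp_pos (y₂ - y₁)]
  rw [mul_left_comm, mul_comm]
  gcongr

lemma exists_interior_of_boundary : ∃ C > 0, ∀ t₁ t₃ : ℂ, ‖t₁‖ = 1 → ‖t₃‖ = 1 → t₁ ≠ t₃ →
    ∃ τ : ℂ, 1 < ‖τ‖ ∧ dist t₁ t₃ ≤ ‖τ‖ - 1 ∧ dist t₁ τ ≤ 2 * (‖τ‖ - 1) ∧
      (‖τ‖ - 1) * ‖deriv Ψ τ‖ ≤ C * dist (Ψ t₁) (Ψ t₃) := by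
  have hA := harnackConst_pos
  have hk := koebeConst_pos
  have hM₀ : 0 < M := zero_lt_one.trans_le hM.one_le
  set C := harnackConst ^ 2 * (12 * koebeConst * (Real.exp 8 * M))
  have hangle : ∀ y₁ y₂ : ℝ, y₁ < y₂ → y₂ ≤ y₁ + π → ∃ τ : ℂ, 1 < ‖τ‖ ∧
      dist (exp (y₁ * I)) (exp (y₂ * I)) ≤ ‖τ‖ - 1 ∧ dist (exp (y₁ * I)) τ = ‖τ‖ - 1 ∧
        (‖τ‖ - 1) * ‖deriv Ψ τ‖ ≤ C * dist (Ψ (exp (y₁ * I))) (Ψ (exp (y₂ * I))) := by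
    intro y₁ y₂ hy hyπ
    have hl : 0 < y₂ - y₁ := sub_pos.2 hy
    have hnorm : ‖exp ((y₂ - y₁ : ℝ) + y₁ * I)‖ = Real.exp (y₂ - y₁) := by
      rw [norm_exp, re_add_mul_I]
    refine ⟨exp ((y₂ - y₁ : ℝ) + y₁ * I), ?_⟩
    rw [hnorm]
    refine ⟨Real.one_lt_exp_iff.2 hl, ?_, dist_exp_mul_I_exp_add_mul_I hl.le y₁,
      h.mul_norm_deriv_le_of_boundary hM hy hyπ⟩
    refine (dist_exp_mul_I_le y₁ y₂).trans ?_
    rw [abs_sub_comm, abs_of_pos hl]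
    linarith [Real.add_one_le_exp (y₂ - y₁)]
  refine ⟨C, by positivity, fun t₁ t₃ ht₁ ht₃ hne => ?_⟩
  obtain ⟨φ, θ, hφ, hθ, -, hφθ⟩ := exists_exp_eq_and_exp_eq ht₁.ge ht₃.ge
  rw [ht₁, Real.log_one, ofReal_zero, zero_add] at hφ
  rw [ht₃, Real.log_one, ofReal_zero, zero_add] at hθ
  subst hφ hθ
  rw [abs_le] at hφθ
  rcases lt_or_gt_of_ne fun heq : φ = θ => hne (by rw [heq]) with hlt | hlt
  · obtain ⟨τ, hτ, hdist, hdistτ, hderiv⟩ := hangle φ θ hlt (by linarith)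
    exact ⟨τ, hτ, hdist, by linarith, hderiv⟩
  · obtain ⟨τ, hτ, hdist, hdistτ, hderiv⟩ := hangle θ φ hlt (by linarith)
    rw [dist_comm] at hdist
    rw [dist_comm (Ψ _)] at hderiv
    exact ⟨τ, hτ, hdist, (dist_triangle _ (exp (θ * I)) τ).trans (by linarith), hderiv⟩

omit hM in
lemma dist_normalize_le {K C : ℝ} (hD : HasDistortionBound Ψ K C) (hK : 1 ≤ K) (hC : 0 ≤ C)
    {a e : ℂ} (ha : 1 ≤ ‖a‖) (he : 1 ≤ ‖e‖) (hae : ‖a‖ - 1 ≤ dist a e) :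
    dist (Ψ a) (Ψ (NormedSpace.normalize a)) ≤ 12 * koebeConst * C * dist (Ψ a) (Ψ e) := by
  have hk := koebeConst_pos
  have hdist := dist_normalize ha
  rcases ha.eq_or_lt with heq | hlt
  · rw [← heq, sub_self, dist_eq_zero] at hdist
    rw [← hdist, dist_self]
    positivity
  · have hnorm : ‖NormedSpace.normalize a‖ = 1 :=
      NormedSpace.norm_normalize_eq_one_iff.2 (norm_pos_iff.1 (by linarith))
    calc dist (Ψ a) (Ψ (NormedSpace.normalize a)) ≤ C * ((‖a‖ - 1) * ‖deriv Ψ a‖) := by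
          rw [dist_comm]
          exact hD hlt hnorm.ge (by rw [dist_comm, hdist]; nlinarith)
      _ ≤ C * (12 * koebeConst * dist (Ψ a) (Ψ e)) := by
          rw [dist_comm (Ψ a)]
          refine mul_le_mul_of_nonneg_left ?_ hC
          exact h.mul_norm_deriv_le (t := e) (by linarith) le_rfl he (by rwa [dist_comm])
      _ = _ := by ring

lemma exists_interior_of_near_boundary : ∃ C > 0, ∀ t₁ t₃ : ℂ, 1 ≤ ‖t₁‖ → 1 ≤ ‖t₃‖ → t₁ ≠ t₃ →
    ‖t₁‖ - 1 ≤ dist t₁ t₃ / 4 → ‖t₃‖ - 1 ≤ dist t₁ t₃ / 4 →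
    ∃ τ : ℂ, 1 < ‖τ‖ ∧ dist t₁ t₃ ≤ 2 * (‖τ‖ - 1) ∧ dist t₁ τ ≤ 3 * (‖τ‖ - 1) ∧
      (‖τ‖ - 1) * ‖deriv Ψ τ‖ ≤ C * dist (Ψ t₁) (Ψ t₃) := by
  obtain ⟨C, hC, hD⟩ := h.exists_hasDistortionBound hM one_pos
  obtain ⟨C', hC', hinterior⟩ := h.exists_interior_of_boundary hM
  have hk := koebeConst_pos
  refine ⟨C' * (24 * koebeConst * C + 1), by positivity, fun t₁ t₃ ht₁ ht₃ hne h₁ h₃ => ?_⟩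
  have hr : 0 < dist t₁ t₃ := dist_pos.2 hne
  have hproj₁ := h.dist_normalize_le hD le_rfl hC.le ht₁ ht₃ (by linarith)
  have hproj₃ := h.dist_normalize_le hD le_rfl hC.le ht₃ ht₁ (by rw [dist_comm]; linarith)
  have hdist₁ := dist_normalize ht₁
  have hdist₃ := dist_normalize ht₃
  have hnorm₁ := NormedSpace.norm_normalize_eq_one_iff.2 (norm_pos_iff.1 (one_pos.trans_le ht₁))
  have hnorm₃ := NormedSpace.norm_normalize_eq_one_iff.2 (norm_pos_iff.1 (one_pos.trans_le ht₃))
  set s₁ := NormedSpace.normalize t₁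
  set s₃ := NormedSpace.normalize t₃
  rw [dist_comm (Ψ t₃) (Ψ t₁), dist_comm (Ψ t₃)] at hproj₃
  rw [dist_comm] at hdist₃
  have hs : dist t₁ t₃ / 2 ≤ dist s₁ s₃ := by linarith [dist_triangle4 t₁ s₁ s₃ t₃]
  obtain ⟨τ, hτ, hdist, hdistτ, hderiv⟩ :=
    hinterior s₁ s₃ hnorm₁ hnorm₃ (dist_pos.1 (by linarith))
  refine ⟨τ, hτ, by linarith, by linarith [dist_triangle t₁ s₁ τ], hderiv.trans ?_⟩
  rw [mul_assoc]
  gcongr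
  have := dist_triangle4 (Ψ s₁) (Ψ t₁) (Ψ t₃) (Ψ s₃)
  rw [dist_comm (Ψ s₁) (Ψ t₁), dist_comm (Ψ t₃) (Ψ s₃)] at this
  linarith

lemma exists_dist_le_of_near_boundary {c : ℝ} (hc : 0 ≤ c) : ∃ H > 0, ∀ t₁ t₂ t₃ : ℂ,
    1 ≤ ‖t₁‖ → 1 ≤ ‖t₂‖ → 1 ≤ ‖t₃‖ → t₁ ≠ t₃ → ‖t₁‖ - 1 ≤ dist t₁ t₃ / 4 →
    ‖t₃‖ - 1 ≤ dist t₁ t₃ / 4 → dist t₁ t₂ ≤ c * dist t₁ t₃ →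
    dist (Ψ t₁) (Ψ t₂) ≤ H * dist (Ψ t₁) (Ψ t₃) := by
  obtain ⟨C, hC, hD⟩ := h.exists_hasDistortionBound hM (K := 2 * c + 3) (by positivity)
  obtain ⟨C', hC', hinterior⟩ := h.exists_interior_of_near_boundary hM
  refine ⟨2 * C * C', by positivity, fun t₁ t₂ t₃ ht₁ ht₂ ht₃ hne h₁ h₃ h₁₂ => ?_⟩
  obtain ⟨τ, hτ, hdist, hdistτ, hderiv⟩ := hinterior t₁ t₃ ht₁ ht₃ hne h₁ h₃
  have hdistτ₂ : dist t₂ τ ≤ (2 * c + 3) * (‖τ‖ - 1) := by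
    linarith [dist_triangle_left t₂ τ t₁, mul_le_mul_of_nonneg_left hdist hc]
  have hτ₁ := hD hτ ht₁ (by nlinarith)
  have hτ₂ := hD hτ ht₂ hdistτ₂
  calc dist (Ψ t₁) (Ψ t₂) ≤ dist (Ψ t₁) (Ψ τ) + dist (Ψ t₂) (Ψ τ) := dist_triangle_right _ _ _
    _ ≤ 2 * C * ((‖τ‖ - 1) * ‖deriv Ψ τ‖) := by linarith
    _ ≤ 2 * C * (C' * dist (Ψ t₁) (Ψ t₃)) := by gcongr
    _ = 2 * C * C' * dist (Ψ t₁) (Ψ t₃) := by ring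

lemma exists_dist_le_of_far_from_boundary {c : ℝ} (hc : 0 < c) : ∃ H > 0, ∀ a b e : ℂ,
    1 ≤ ‖b‖ → 1 ≤ ‖e‖ → a ≠ e → dist a e / 4 ≤ ‖a‖ - 1 → dist a b ≤ c * dist a e →
    dist (Ψ a) (Ψ b) ≤ H * dist (Ψ a) (Ψ e) := by
  obtain ⟨C, hC, hD⟩ := h.exists_hasDistortionBound hM (K := 4 * c) (by positivity)
  have hk := koebeConst_pos
  refine ⟨2 * c * (koebeConst + C) * (48 * koebeConst), by positivity,
    fun a b e hb he hne hae hab => ?_⟩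
  have hr : 0 < dist a e := dist_pos.2 hne
  have hlower := h.mul_norm_deriv_le (τ := a) (t := e) (s := dist a e / 4) (by positivity) hae he
    (by rw [dist_comm e a]; linarith)
  rw [dist_comm (Ψ e)] at hlower
  have hupper : dist (Ψ a) (Ψ b) ≤ 2 * c * (koebeConst + C) * (dist a e * ‖deriv Ψ a‖) := by
    rw [dist_comm] at hab ⊢
    have hkpos : 0 ≤ 2 * c * koebeConst * (dist a e * ‖deriv Ψ a‖) := by positivity
    have hCpos : 0 ≤ 2 * c * C * (dist a e * ‖deriv Ψ a‖) := by positivity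
    rcases le_or_gt (2 * c * dist a e) (‖a‖ - 1) with hcase | hcase
    · linarith [h.dist_le_of_le_half (t := b) (by positivity) hcase (by linarith)]
    · have hderiv : C * ((‖a‖ - 1) * ‖deriv Ψ a‖) ≤ C * (2 * c * dist a e * ‖deriv Ψ a‖) := by
        gcongr
      linarith [hD (τ := a) (by linarith) hb (by nlinarith)]
  calc dist (Ψ a) (Ψ b) ≤ 2 * c * (koebeConst + C) * (dist a e * ‖deriv Ψ a‖) := hupper
    _ ≤ 2 * c * (koebeConst + C) * (48 * koebeConst * dist (Ψ a) (Ψ e)) := by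
        refine mul_le_mul_of_nonneg_left ?_ (by positivity)
        linarith
    _ = _ := by ring

theorem exists_weakQuasisymmOn {c : ℝ} (hc : 0 < c) :
    ∃ H > 0, WeakQuasisymmOn Ψ {t : ℂ | 1 ≤ ‖t‖} c H := by
  obtain ⟨H₁, hH₁, hfar₁⟩ := h.exists_dist_le_of_far_from_boundary hM hc
  obtain ⟨H₃, hH₃, hfar₃⟩ := h.exists_dist_le_of_far_from_boundary hM (c := c + 1) (by positivity)
  obtain ⟨H, hH, hnear⟩ := h.exists_dist_le_of_near_boundary hM hc.le
  refine ⟨H₁ + (1 + H₃) + H, by positivity, fun t₁ ht₁ t₂ ht₂ t₃ ht₃ h₁₂ => ?_⟩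
  have hH₁d : 0 ≤ H₁ * dist (Ψ t₁) (Ψ t₃) := by positivity
  have hH₃d : 0 ≤ (1 + H₃) * dist (Ψ t₁) (Ψ t₃) := by positivity
  have hHd : 0 ≤ H * dist (Ψ t₁) (Ψ t₃) := by positivity
  rcases eq_or_ne t₁ t₃ with rfl | hne
  · rw [dist_self, mul_zero, dist_le_zero] at h₁₂
    rw [h₁₂, dist_self, mul_zero]
  rcases le_total (dist t₁ t₃ / 4) (‖t₁‖ - 1) with hcase₁ | hcase₁
  · linarith [hfar₁ t₁ t₂ t₃ ht₂ ht₃ hne hcase₁ h₁₂]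
  rcases le_total (dist t₁ t₃ / 4) (‖t₃‖ - 1) with hcase₃ | hcase₃
  · have hfar := hfar₃ t₃ t₂ t₁ ht₂ ht₁ hne.symm (by rwa [dist_comm]) (by
      rw [dist_comm t₃ t₁]
      linarith [dist_triangle_left t₃ t₂ t₁])
    rw [dist_comm (Ψ t₃) (Ψ t₁)] at hfar
    linarith [dist_triangle (Ψ t₁) (Ψ t₃) (Ψ t₂)]
  · linarith [hnear t₁ t₂ t₃ ht₁ ht₂ ht₃ hne hcase₁ hcase₃ h₁₂]

end Boundary

end IsExtParam

/-! ### The inverse of the exterior conformal map -/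

lemma continuousOn_of_invOn {X Y : Type*} [TopologicalSpace X] [TopologicalSpace Y] [T2Space Y]
    {S : Set X} {T : Set Y} {f : X → Y} {g : Y → X} (hS : IsClosed S) (hf : ContinuousOn f S)
    (hg : MapsTo g T S) (hinv : InvOn g f S T)
    (hK : ∀ t ∈ T, ∃ K, IsCompact K ∧ ∀ᶠ s in 𝓝[T] t, g s ∈ K) : ContinuousOn g T := by
  intro t ht
  obtain ⟨K, hKc, hgK⟩ := hK t ht
  refine (hKc.inter_left hS).tendsto_nhds_of_unique_mapClusterPt ?_ fun x hx hcl => ?_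
  · filter_upwards [hgK, self_mem_nhdsWithin] with s hsK hs using ⟨hg hs, hsK⟩
  · obtain ⟨U, hU, hUx⟩ := mapClusterPt_iff_ultrafilter.1 hcl
    have hUT : ∀ᶠ s in U, s ∈ T := hU self_mem_nhdsWithin
    have hfg : Tendsto (f ∘ g) U (𝓝 (f x)) :=
      (hf x hx.1).tendsto.comp (tendsto_nhdsWithin_iff.2 ⟨hUx, hUT.mono fun s hs => hg hs⟩)
    have hid : Tendsto (f ∘ g) U (𝓝 t) :=
      (tendsto_id'.2 (hU.trans nhdsWithin_le_nhds)).congr' (hUT.mono fun s hs => (hinv.2 hs).symm)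
    rw [← tendsto_nhds_unique hfg hid, hinv.1 hx.1]

section LocalInverse

variable {f g : ℂ → ℂ} {t : ℂ}

lemma eventually_deriv_ne_zero_of_local_right_inverse (hf : AnalyticAt ℂ f (g t))
    (hg : ContinuousAt g t) (hfg : ∀ᶠ s in 𝓝 t, f (g s) = s) :
    ∀ᶠ z in 𝓝[≠] g t, deriv f z ≠ 0 := by
  refine hf.deriv.eventually_eq_zero_or_eventually_ne_zero.resolve_left fun h0 => ?_
  obtain ⟨ε, hε, hball⟩ := Metric.mem_nhds_iff.1 (h0.and hf.eventually_analyticAt)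
  have hconst : ∀ᶠ s in 𝓝 t, f (g s) = f (g t) := by
    filter_upwards [hg (ball_mem_nhds _ hε)] with s hs
    exact isOpen_ball.is_const_of_deriv_eq_zero (convex_ball _ ε).isPreconnected
      (fun z hz => (hball hz).2.differentiableAt.differentiableWithinAt) (fun z hz => (hball hz).1)
      hs (mem_ball_self hε)
  have heq : ∀ᶠ s in 𝓝 t, s = t := by
    filter_upwards [hconst, hfg] with s hs hs'
    rw [← hs', hs, hfg.self_of_nhds]
  obtain ⟨s, hs, hst⟩ := ((eventually_nhdsWithin_of_eventually_nhds heq).and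
    (self_mem_nhdsWithin (s := {t}ᶜ))).exists
  exact hst hs

lemma differentiableAt_of_local_right_inverse (hf : AnalyticAt ℂ f (g t))
    (hg : ∀ᶠ s in 𝓝 t, ContinuousAt g s) (hfg : ∀ᶠ s in 𝓝 t, f (g s) = s) :
    DifferentiableAt ℂ g t := by
  have hgt : ContinuousAt g t := hg.self_of_nhds
  have hne : Tendsto g (𝓝[≠] t) (𝓝[≠] (g t)) := by
    refine tendsto_nhdsWithin_iff.2 ⟨hgt.tendsto.mono_left nhdsWithin_le_nhds, ?_⟩
    filter_upwards [self_mem_nhdsWithin, nhdsWithin_le_nhds hfg] with s hst hs heq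
    exact hst (by rw [← hs, heq, hfg.self_of_nhds]; rfl)
  refine (analyticAt_of_differentiable_on_punctured_nhds_of_continuousAt ?_ hgt).differentiableAt
  filter_upwards [hne (eventually_deriv_ne_zero_of_local_right_inverse hf hgt hfg),
    nhdsWithin_le_nhds hg, nhdsWithin_le_nhds hfg.eventually_nhds,
    nhdsWithin_le_nhds (hgt hf.eventually_analyticAt)] with s hs hgs hfgs hfs
  exact (HasDerivAt.of_local_left_inverse hgs hfs.differentiableAt.hasDerivAt hs
    hfgs).differentiableAt

lemma deriv_ne_zero_of_local_right_inverse (hf : DifferentiableAt ℂ f (g t))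
    (hg : DifferentiableAt ℂ g t) (hfg : ∀ᶠ s in 𝓝 t, f (g s) = s) : deriv g t ≠ 0 := fun h0 => by
  have hone := (hf.hasDerivAt.comp t hg.hasDerivAt).unique
    ((hasDerivAt_id t).congr_of_eventuallyEq hfg)
  simp [h0] at hone

end LocalInverse

lemma tendsto_deriv_cobounded {f : ℂ → ℂ} {q : ℂ}
    (hd : ∀ᶠ z in cobounded ℂ, DifferentiableAt ℂ f z)
    (hlim : Tendsto (fun z => f z / z) (cobounded ℂ) (𝓝 q)) :
    Tendsto (deriv f) (cobounded ℂ) (𝓝 q) := by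
  refine Metric.tendsto_nhds.2 fun ε hε => ?_
  have hev := hd.and (Metric.tendsto_nhds.1 hlim (ε / 6) (by positivity))
  rw [← comap_norm_atTop, eventually_comap] at hev
  obtain ⟨R, hR⟩ := eventually_atTop.1 hev
  filter_upwards [tendsto_norm_cobounded_atTop.eventually_ge_atTop (max 1 (2 * R))] with t ht
  have ht0 : 0 < ‖t‖ := zero_lt_one.trans_le ((le_max_left _ _).trans ht)
  have htR : 2 * R ≤ ‖t‖ := (le_max_right _ _).trans ht
  have hnorm : ∀ z ∈ closedBall t (‖t‖ / 2), ‖t‖ / 2 ≤ ‖z‖ ∧ ‖z‖ ≤ 3 / 2 * ‖t‖ := fun z hz => by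
    rw [mem_closedBall, dist_eq_norm] at hz
    constructor <;> linarith [norm_sub_norm_le z t, norm_sub_norm_le t z, norm_sub_rev z t]
  have hdiff : ∀ z ∈ closedBall t (‖t‖ / 2), DifferentiableAt ℂ (fun z => f z - q * z) z :=
    fun z hz => (hR ‖z‖ (by linarith [hnorm z hz]) z rfl).1.sub (by fun_prop)
  have hbound : ∀ z ∈ sphere t (‖t‖ / 2), ‖f z - q * z‖ ≤ ε / 4 * ‖t‖ := fun z hz => by
    obtain ⟨hz₁, hz₂⟩ := hnorm z (sphere_subset_closedBall hz)
    have hz0 : z ≠ 0 := norm_pos_iff.1 (by linarith)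
    have hclose := (hR ‖z‖ (by linarith) z rfl).2
    rw [dist_eq_norm] at hclose
    calc ‖f z - q * z‖ = ‖f z / z - q‖ * ‖z‖ := by rw [← norm_mul, sub_mul, div_mul_cancel₀ _ hz0]
      _ ≤ ε / 6 * (3 / 2 * ‖t‖) := by gcongr
      _ = ε / 4 * ‖t‖ := by ring
  have hcauchy := norm_deriv_le_of_forall_mem_sphere_norm_le (by positivity)
    (DifferentiableOn.diffContOnCl_ball (U := closedBall t (‖t‖ / 2))
      (fun z hz => (hdiff z hz).differentiableWithinAt) subset_rfl) hbound
  rw [deriv_fun_sub (hR ‖t‖ (by linarith) t rfl).1 (by fun_prop), deriv_const_mul_field,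
    deriv_id'', mul_one] at hcauchy
  rw [dist_eq_norm]
  refine hcauchy.trans_lt ?_
  rw [div_lt_iff₀ (by positivity)]
  nlinarith

lemma exists_pos_forall_le_of_eventually_le {X : Type*} [PseudoMetricSpace X] [ProperSpace X]
    {S : Set X} {f : X → ℝ} (hS : IsClosed S) (hf : ContinuousOn f S) (hpos : ∀ x ∈ S, 0 < f x)
    {m : ℝ} (hm : 0 < m) (hev : ∀ᶠ x in cobounded X, m ≤ f x) : ∃ m > 0, ∀ x ∈ S, m ≤ f x := by
  by_cases hne : ∃ x ∈ S, f x < m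
  · obtain ⟨x₀, hx₀, hlt⟩ := hne
    obtain ⟨x, hx, hmin⟩ := hf.exists_isMinOn' hS hx₀ (by
      rw [← Metric.cobounded_eq_cocompact]
      exact mem_inf_of_left (hev.mono fun y hy => hlt.le.trans hy))
    exact ⟨f x, hpos x hx, fun y hy => hmin hy⟩
  · push Not at hne
    exact ⟨m, hm, hne⟩

lemma meetsCircles_of_isPreconnected {X : Type*} [PseudoMetricSpace X] {S : Set X}
    (hS : IsPreconnected S) (hb : ¬IsBounded S) : MeetsCircles S := by
  intro x hx r hr
  obtain ⟨y, hy, hry⟩ : ∃ y ∈ S, r ≤ dist x y := by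
    by_contra! hlt
    exact hb (isBounded_closedBall.subset fun y hy => mem_closedBall'.2 (hlt y hy).le)
  exact hS.intermediate_value hx hy (f := dist x) (by fun_prop) ⟨(dist_self x).trans_le hr, hry⟩

/-- The inverse `Ψ = Φ⁻¹` of an exterior conformal map, on the closed exterior of the unit disk;
its values inside the open unit disk are junk. -/
def extInv (Ω : Set ℂ) (Φ : ℂ → ℂ) : ℂ → ℂ := Function.invFunOn Φ (closure Ω)

lemma extDisk_subset_one_le_norm : extDisk ⊆ {t : ℂ | 1 ≤ ‖t‖} := fun t (ht : 1 < ‖t‖) => ht.le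

namespace IsExtConformalClosure

variable {Ω : Set ℂ} {Φ : ℂ → ℂ} (h : IsExtConformalClosure Ω Φ)
include h

lemma mapsTo_extInv : MapsTo (extInv Ω Φ) {t : ℂ | 1 ≤ ‖t‖} (closure Ω) :=
  h.2.2.surjOn.mapsTo_invFunOn

lemma invOn_extInv : InvOn (extInv Ω Φ) Φ (closure Ω) {t : ℂ | 1 ≤ ‖t‖} :=
  h.2.2.invOn_invFunOn

lemma mapsTo_extInv_extDisk : MapsTo (extInv Ω Φ) extDisk Ω := fun t ht => by
  obtain ⟨z, hz, rfl⟩ := h.1.2.1.surjOn ht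
  rwa [h.invOn_extInv.1 (subset_closure hz)]

lemma exists_norm_le_mul_norm_apply : ∃ B > 0, ∀ z ∈ closure Ω, ‖z‖ ≤ B * ‖Φ z‖ := by
  obtain ⟨c, hc, hlim⟩ := h.1.2.2
  have hev := hlim.norm.eventually_const_lt (show c / 2 < ‖(c : ℂ)‖ by
    rw [norm_real, Real.norm_of_nonneg hc.le]; linarith)
  rw [← comap_norm_atTop, eventually_comap] at hev
  obtain ⟨R, hR⟩ := eventually_atTop.1 hev
  refine ⟨max (2 / c) R, by positivity, fun z hz => ?_⟩
  have hone : 1 ≤ ‖Φ z‖ := h.2.2.mapsTo hz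
  rcases le_total ‖z‖ R with hzR | hzR
  · exact hzR.trans ((le_max_right _ _).trans (le_mul_of_one_le_right (by positivity) hone))
  · have hlt := hR _ hzR z rfl
    have hz0 : 0 < ‖z‖ := by
      by_contra! h0
      rw [norm_le_zero_iff.1 h0, div_zero, norm_zero] at hlt
      linarith
    rw [norm_div, lt_div_iff₀ hz0] at hlt
    calc ‖z‖ = 2 / c * (c / 2 * ‖z‖) := by field_simp
      _ ≤ max (2 / c) R * ‖Φ z‖ := by gcongr; exact le_max_left _ _

lemma tendsto_extInv_cobounded : Tendsto (extInv Ω Φ) (cobounded ℂ) (cobounded ℂ) := by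
  rw [← tendsto_norm_atTop_iff_cobounded, Filter.tendsto_atTop]
  intro r
  obtain ⟨N, hN⟩ := ((isCompact_closedBall (0 : ℂ) r).inter_left
    isClosed_closure).exists_bound_of_continuousOn (h.2.1.mono inter_subset_left)
  filter_upwards [tendsto_norm_cobounded_atTop.eventually_gt_atTop (max 1 N)] with t ht
  have ht1 : 1 ≤ ‖t‖ := (le_max_left _ _).trans ht.le
  by_contra! hlt
  have hle := hN _ ⟨h.mapsTo_extInv ht1, mem_closedBall_zero_iff.2 hlt.le⟩
  rw [h.invOn_extInv.2 ht1] at hle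
  exact (((le_max_right _ _).trans_lt ht).trans_le hle).false

lemma tendsto_extInv_div : ∃ q ≠ 0, Tendsto (fun t => extInv Ω Φ t / t) (cobounded ℂ) (𝓝 q) := by
  obtain ⟨c, hc, hlim⟩ := h.1.2.2
  have hc0 : (c : ℂ) ≠ 0 := ofReal_ne_zero.2 hc.ne'
  refine ⟨(c : ℂ)⁻¹, inv_ne_zero hc0, ?_⟩
  refine ((hlim.comp h.tendsto_extInv_cobounded).inv₀ hc0).congr' ?_
  filter_upwards [tendsto_norm_cobounded_atTop.eventually_ge_atTop 1] with t ht
  rw [Function.comp_apply, h.invOn_extInv.2 ht, inv_div]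

lemma continuousOn_extInv : ContinuousOn (extInv Ω Φ) {t : ℂ | 1 ≤ ‖t‖} := by
  obtain ⟨B, hB, hle⟩ := h.exists_norm_le_mul_norm_apply
  refine continuousOn_of_invOn isClosed_closure h.2.1 h.mapsTo_extInv h.invOn_extInv fun t _ =>
    ⟨closedBall 0 (B * (‖t‖ + 1)), isCompact_closedBall _ _, ?_⟩
  filter_upwards [self_mem_nhdsWithin, nhdsWithin_le_nhds (ball_mem_nhds t one_pos)] with s hs hst
  rw [mem_closedBall_zero_iff]
  refine (hle _ (h.mapsTo_extInv hs)).trans ?_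
  rw [h.invOn_extInv.2 hs]
  rw [mem_ball, dist_eq_norm] at hst
  gcongr
  linarith [norm_sub_norm_le s t]

lemma continuousAt_extInv {t : ℂ} (ht : t ∈ extDisk) : ContinuousAt (extInv Ω Φ) t :=
  h.continuousOn_extInv.continuousAt
    (mem_of_superset (isOpen_extDisk.mem_nhds ht) extDisk_subset_one_le_norm)

lemma eventually_apply_extInv {t : ℂ} (ht : t ∈ extDisk) : ∀ᶠ s in 𝓝 t, Φ (extInv Ω Φ s) = s := by
  filter_upwards [isOpen_extDisk.mem_nhds ht] with s hs
    using h.invOn_extInv.2 (extDisk_subset_one_le_norm hs)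

lemma analyticAt_apply_extInv (hΩ : IsOpen Ω) {t : ℂ} (ht : t ∈ extDisk) :
    AnalyticAt ℂ Φ (extInv Ω Φ t) :=
  h.1.1.analyticAt (hΩ.mem_nhds (h.mapsTo_extInv_extDisk ht))

lemma differentiableAt_extInv (hΩ : IsOpen Ω) {t : ℂ} (ht : t ∈ extDisk) :
    DifferentiableAt ℂ (extInv Ω Φ) t :=
  differentiableAt_of_local_right_inverse (h.analyticAt_apply_extInv hΩ ht)
    (by filter_upwards [isOpen_extDisk.mem_nhds ht] with s hs using h.continuousAt_extInv hs)
    (h.eventually_apply_extInv ht)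

lemma deriv_extInv_ne_zero (hΩ : IsOpen Ω) {t : ℂ} (ht : t ∈ extDisk) :
    deriv (extInv Ω Φ) t ≠ 0 :=
  deriv_ne_zero_of_local_right_inverse (h.analyticAt_apply_extInv hΩ ht).differentiableAt
    (h.differentiableAt_extInv hΩ ht) (h.eventually_apply_extInv ht)

lemma exists_pos_le_norm_deriv_extInv (hΩ : IsOpen Ω) {r : ℝ} (hr : 1 < r) :
    ∃ m > 0, ∀ t : ℂ, r ≤ ‖t‖ → m ≤ ‖deriv (extInv Ω Φ) t‖ := by
  obtain ⟨q, hq, hlim⟩ := h.tendsto_extInv_div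
  have hdiff : DifferentiableOn ℂ (extInv Ω Φ) extDisk :=
    fun t ht => (h.differentiableAt_extInv hΩ ht).differentiableWithinAt
  have hsub : {t : ℂ | r ≤ ‖t‖} ⊆ extDisk := fun t (ht : r ≤ ‖t‖) => hr.trans_le ht
  have hev : ∀ᶠ t in cobounded ℂ, DifferentiableAt ℂ (extInv Ω Φ) t :=
    (tendsto_norm_cobounded_atTop.eventually_gt_atTop 1).mono
      fun t ht => h.differentiableAt_extInv hΩ ht
  exact exists_pos_forall_le_of_eventually_le (isClosed_le continuous_const continuous_norm)
    ((hdiff.deriv isOpen_extDisk).continuousOn.mono hsub).norm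
    (fun t ht => norm_pos_iff.2 (h.deriv_extInv_ne_zero hΩ (hsub ht)))
    (half_pos (norm_pos_iff.2 hq))
    (((tendsto_deriv_cobounded hev hlim).norm.eventually_const_lt
      (half_lt_self (norm_pos_iff.2 hq))).mono fun t ht => ht.le)

lemma isExtParam_extInv (hΩ : IsOpen Ω) : IsExtParam (extInv Ω Φ) where
  differentiableOn _ ht := (h.differentiableAt_extInv hΩ ht).differentiableWithinAt
  deriv_ne_zero _ := h.deriv_extInv_ne_zero hΩ
  injOn := h.invOn_extInv.2.injOn
  continuousOn := h.continuousOn_extInv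
  growth := by
    obtain ⟨B, hB, hle⟩ := h.exists_norm_le_mul_norm_apply
    refine ⟨B, hB, fun t ht => (hle _ (h.mapsTo_extInv ht)).trans_eq ?_⟩
    rw [h.invOn_extInv.2 ht]
  lower _ := h.exists_pos_le_norm_deriv_extInv hΩ

lemma isPreconnected_closure : IsPreconnected (closure Ω) := by
  have hexp : exp '' {w : ℂ | 0 ≤ w.re} = {t : ℂ | 1 ≤ ‖t‖} := by
    refine Subset.antisymm (image_subset_iff.2 fun w hw => one_le_norm_exp hw) fun t ht => ?_
    have ht0 : t ≠ 0 := norm_pos_iff.1 (zero_lt_one.trans_le ht)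
    exact ⟨log t, (Real.log_nonneg ht).trans_eq (log_re t).symm, exp_log ht0⟩
  rw [← (h.invOn_extInv.symm.bijOn h.mapsTo_extInv h.2.2.mapsTo).image_eq, ← hexp]
  exact ((convex_halfSpace_re_ge 0).isPreconnected.image _ continuous_exp.continuousOn).image _
    (hexp ▸ h.continuousOn_extInv)

lemma not_isBounded_closure : ¬IsBounded (closure Ω) := fun hb => by
  obtain ⟨t, hbt, ht⟩ := ((h.tendsto_extInv_cobounded.eventually_mem (isBounded_def.1 hb)).and
    (tendsto_norm_cobounded_atTop.eventually_ge_atTop 1)).exists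
  exact hbt (h.mapsTo_extInv ht)

lemma meetsCircles_closure : MeetsCircles (closure Ω) :=
  meetsCircles_of_isPreconnected h.isPreconnected_closure h.not_isBounded_closure

end IsExtConformalClosure

/-! ### Bounded turning -/

/-- `Γ` has bounded turning (the three-point condition of Ahlfors characterizing quasicircles) with
constant `M`: any two points of `Γ` lie on a subarc whose diameter is at most `M` times their
distance. -/
def HasBoundedTurning (Γ : Set ℂ) (M : ℝ) : Prop :=
  ∀ z₁ ∈ Γ, ∀ z₂ ∈ Γ, ∃ J, IsSubarc Γ J ∧ z₁ ∈ J ∧ z₂ ∈ J ∧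
    ∀ z ∈ J, ∀ w ∈ J, dist z w ≤ M * dist z₁ z₂

lemma edist_le_hausdorffMeasure_one {X : Type*} [MetricSpace X] [MeasurableSpace X]
    [BorelSpace X] {J : Set X} (hJ : IsPreconnected J) {a b : X} (ha : a ∈ J) (hb : b ∈ J) :
    edist a b ≤ μH[1] J := by
  have hsub : Icc (dist a a) (dist a b) ⊆ dist a '' J :=
    hJ.intermediate_value ha hb (continuous_const.dist continuous_id).continuousOn
  calc edist a b = μH[1] (Icc (dist a a) (dist a b)) := by
        rw [hausdorffMeasure_real, Real.volume_Icc, dist_self, sub_zero, edist_dist]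
    _ ≤ μH[1] (dist a '' J) := measure_mono hsub
    _ ≤ μH[1] J := by
        simpa using (LipschitzWith.dist_right a).hausdorffMeasure_image_le zero_le_one J

lemma IsQuasismooth.hasBoundedTurning {Γ : Set ℂ} {Λ : ℝ} (h : IsQuasismooth Γ Λ) :
    HasBoundedTurning Γ (2 * Λ) := by
  obtain ⟨hΛ, hlen⟩ := h
  intro z₁ hz₁ z₂ hz₂
  rcases eq_or_ne z₁ z₂ with rfl | hne
  · exact ⟨{z₁}, ⟨singleton_subset_iff.2 hz₁, isClosed_singleton, isPreconnected_singleton⟩, rfl,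
      rfl, by simp⟩
  · have hd : 0 < dist z₁ z₂ := dist_pos.2 hne
    have hlt : shorterArcLength Γ z₁ z₂ < ENNReal.ofReal (2 * Λ * dist z₁ z₂) :=
      (hlen z₁ hz₁ z₂ hz₂).trans_lt
        ((ENNReal.ofReal_lt_ofReal_iff (by positivity)).2 (by nlinarith))
    simp only [shorterArcLength, iInf_lt_iff, exists_prop] at hlt
    obtain ⟨J, ⟨hJ, hz₁J, hz₂J⟩, hJlen⟩ := hlt
    refine ⟨J, hJ, hz₁J, hz₂J, fun z hz w hw => ?_⟩
    rw [← edist_le_ofReal (by positivity)]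
    exact (edist_le_hausdorffMeasure_one hJ.2.2 hz hw).trans hJlen.le

lemma continuousOn_invFunOn_of_isCompact {X Y : Type*} [TopologicalSpace X] [T2Space X]
    [TopologicalSpace Y] [T2Space Y] [Nonempty X] {f : X → Y} {K : Set X} {T : Set Y}
    (hK : IsCompact K) (hf : ContinuousOn f K) (hbij : BijOn f K T) :
    ContinuousOn (Function.invFunOn f K) T :=
  continuousOn_of_invOn hK.isClosed hf hbij.surjOn.mapsTo_invFunOn hbij.invOn_invFunOn
    fun _ _ => ⟨K, hK, eventually_mem_of_tendsto_nhdsWithin tendsto_id |>.mono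
      hbij.surjOn.mapsTo_invFunOn⟩

lemma exp_mul_I_mem_sphere (y : ℝ) : exp (y * I) ∈ sphere (0 : ℂ) 1 := by
  simp [norm_exp_ofReal_mul_I]

lemma not_injOn_of_continuousOn_sphere {F : ℂ → ℝ} (hF : ContinuousOn F (sphere 0 1)) :
    ¬InjOn F (sphere 0 1) := by
  intro hinj
  have hneg : ∀ y : ℝ, -exp (y * I) ∈ sphere (0 : ℂ) 1 := fun y => by
    simp [norm_exp_ofReal_mul_I]
  have hcont : Continuous fun y : ℝ => F (exp (y * I)) - F (-exp (y * I)) :=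
    (hF.comp_continuous (by fun_prop) exp_mul_I_mem_sphere).sub
      (hF.comp_continuous (by fun_prop) hneg)
  obtain ⟨y, hy⟩ : ∃ y : ℝ, F (exp (y * I)) - F (-exp (y * I)) = 0 := by
    rcases le_total (F 1) (F (-1)) with h | h
    · exact mem_range_of_exists_le_of_exists_ge hcont ⟨0, by simpa using h⟩
        ⟨π, by simpa [exp_pi_mul_I] using h⟩
    · exact mem_range_of_exists_le_of_exists_ge hcont
        ⟨π, by simpa [exp_pi_mul_I] using h⟩ ⟨0, by simpa using h⟩
  exact exp_ne_zero _ (self_eq_neg.1 (hinj (exp_mul_I_mem_sphere y) (hneg y) (sub_eq_zero.1 hy)))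

section ArgNegDiv

variable {p p' q : ℂ} (hp : p ∈ sphere (0 : ℂ) 1) (hq : q ∈ sphere (0 : ℂ) 1)
include hp hq

lemma neg_div_mem_slitPlane_of_ne (hpq : p ≠ q) : -p / q ∈ slitPlane := by
  have hp0 : p ≠ 0 := ne_of_mem_sphere hp one_ne_zero
  have hq0 : q ≠ 0 := ne_of_mem_sphere hq one_ne_zero
  rw [mem_sphere_zero_iff_norm] at hp hq
  refine mem_slitPlane_iff_arg.2 ⟨fun harg => hpq ?_, div_ne_zero (neg_ne_zero.2 hp0) hq0⟩
  have heq : -p / q = -1 :=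
    Complex.ext_norm_arg (by simp [hp, hq]) (harg.trans arg_neg_one.symm)
  rw [div_eq_iff hq0] at heq
  linear_combination -heq

lemma eq_of_arg_neg_div_eq (hp' : p' ∈ sphere (0 : ℂ) 1) (h : arg (-p / q) = arg (-p' / q)) :
    p = p' := by
  have hq0 : q ≠ 0 := ne_of_mem_sphere hq one_ne_zero
  rw [mem_sphere_zero_iff_norm] at hp hp' hq
  exact neg_injective ((div_left_inj' hq0).1 (Complex.ext_norm_arg (by simp [hp, hp', hq]) h))

end ArgNegDiv

lemma continuousOn_arg_neg_div {q : ℂ} (hq : q ∈ sphere (0 : ℂ) 1) :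
    ContinuousOn (fun p => arg (-p / q)) (sphere 0 1 \ {q}) := fun p hp =>
  ((continuousAt_arg (neg_div_mem_slitPlane_of_ne hp.1 hq hp.2)).comp
    (f := fun p => -p / q) (by fun_prop (disch := exact ne_of_mem_sphere hq one_ne_zero)))
    |>.continuousWithinAt

lemma surjOn_sphere_of_injOn {g : ℂ → ℂ} (hg : ContinuousOn g (sphere 0 1))
    (hinj : InjOn g (sphere 0 1)) (hmaps : MapsTo g (sphere 0 1) (sphere 0 1)) :
    SurjOn g (sphere 0 1) (sphere 0 1) := by
  intro q hq
  by_contra hne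
  have hmaps' : MapsTo g (sphere 0 1) (sphere 0 1 \ {q}) :=
    fun x hx => ⟨hmaps hx, fun hxq => hne ⟨x, hx, hxq⟩⟩
  exact not_injOn_of_continuousOn_sphere ((continuousOn_arg_neg_div hq).comp hg hmaps')
    fun x hx x' hx' heq => hinj hx hx' (eq_of_arg_neg_div_eq (hmaps hx) hq (hmaps hx') heq)

lemma arg_neg_exp_div_exp {θ y : ℝ} (h₁ : y < θ) (h₂ : θ ≤ y + 2 * π) :
    arg (-exp (θ * I) / exp (y * I)) = θ - y - π := by
  have heq : -exp (θ * I) / exp (y * I) = exp (((θ - y - π : ℝ) : ℂ) * I) := by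
    push_cast
    rw [sub_mul, exp_sub, exp_pi_mul_I, sub_mul, exp_sub, div_neg, div_one, neg_div]
  rw [heq, arg_exp_mul_I, toIocMod_eq_self]
  constructor <;> linarith

lemma exp_mem_or_neg_exp_mem_of_isPreconnected {P : Set ℂ} (hP : IsPreconnected P)
    (hPs : P ⊆ sphere 0 1) {y₁ y₂ y : ℝ} (hπ : y₂ ≤ y₁ + π) (hy : y ∈ Icc y₁ y₂)
    (hy₁ : exp (y₁ * I) ∈ P) (hy₂ : exp (y₂ * I) ∈ P) :
    exp (y * I) ∈ P ∨ -exp (y₂ * I) ∈ P := by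
  refine or_iff_not_imp_left.2 fun hyP => ?_
  have hlt₁ : y₁ < y := hy.1.lt_of_ne fun heq => hyP (heq ▸ hy₁)
  have hlt₂ : y < y₂ := hy.2.lt_of_ne fun heq => hyP (heq ▸ hy₂)
  have hs := exp_mul_I_mem_sphere y
  have hcont : ContinuousOn (fun p => arg (-p / exp (y * I))) P :=
    (continuousOn_arg_neg_div hs).mono fun p hp => ⟨hPs hp, fun hpy => hyP (hpy ▸ hp)⟩
  have hturn : exp (((y₁ + 2 * π : ℝ) : ℂ) * I) = exp (y₁ * I) := by
    push_cast
    rw [add_mul, exp_add, exp_two_pi_mul_I, mul_one]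
  have hopp : exp (((y₂ + π : ℝ) : ℂ) * I) = -exp (y₂ * I) := by
    push_cast
    rw [add_mul, exp_add, exp_pi_mul_I, mul_neg_one]
  have harg₁ := arg_neg_exp_div_exp (θ := y₁ + 2 * π) (y := y) (by linarith) (by linarith)
  have harg₂ := arg_neg_exp_div_exp hlt₂ (by linarith)
  have harg := arg_neg_exp_div_exp (θ := y₂ + π) (y := y) (by linarith) (by linarith)
  rw [hturn] at harg₁
  rw [hopp] at harg
  obtain ⟨p, hp, hpe⟩ := hP.intermediate_value hy₂ hy₁ hcont
    (show arg (- -exp (y₂ * I) / exp (y * I)) ∈ Icc _ _ by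
      simp only [harg₁, harg₂, harg]
      constructor <;> linarith)
  rwa [eq_of_arg_neg_div_eq (hPs hp) hs (hopp ▸ exp_mul_I_mem_sphere _) hpe] at hp

lemma exists_pos_le_norm_sub_neg {Ψ : ℂ → ℂ} (hc : ContinuousOn Ψ (sphere 0 1))
    (hinj : InjOn Ψ (sphere 0 1)) : ∃ δ > 0, ∀ t ∈ sphere (0 : ℂ) 1, δ ≤ ‖Ψ t - Ψ (-t)‖ := by
  have hneg : MapsTo Neg.neg (sphere (0 : ℂ) 1) (sphere 0 1) := fun t ht => by simpa using ht
  refine (isCompact_sphere (0 : ℂ) 1).exists_forall_le'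
    (hc.sub (hc.comp continuousOn_neg hneg)).norm fun t ht =>
      norm_pos_iff.2 (sub_ne_zero.2 fun heq => ?_)
  exact ne_of_mem_sphere ht one_ne_zero (self_eq_neg.1 (hinj ht (hneg ht) heq))

lemma isPreconnected_sphere_inter_preimage {Ψ : ℂ → ℂ} {Γ J : Set ℂ}
    (hc : ContinuousOn Ψ (sphere 0 1)) (hbij : BijOn Ψ (sphere 0 1) Γ) (hJ : IsPreconnected J)
    (hJΓ : J ⊆ Γ) : IsPreconnected (sphere 0 1 ∩ Ψ ⁻¹' J) := by
  have himage : Function.invFunOn Ψ (sphere 0 1) '' J = sphere 0 1 ∩ Ψ ⁻¹' J := by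
    ext t
    constructor
    · rintro ⟨z, hz, rfl⟩
      exact ⟨hbij.surjOn.mapsTo_invFunOn (hJΓ hz), by
        rwa [mem_preimage, hbij.invOn_invFunOn.2 (hJΓ hz)]⟩
    · exact fun ht => ⟨Ψ t, ht.2, hbij.invOn_invFunOn.1 ht.1⟩
  exact himage ▸ hJ.image _
    ((continuousOn_invFunOn_of_isCompact (isCompact_sphere 0 1) hc hbij).mono hJΓ)

lemma HasBoundedTurning.exists_hasBoundedTurningParam {Ψ : ℂ → ℂ} {Γ : Set ℂ} {M : ℝ}
    (hM : HasBoundedTurning Γ M) (hc : ContinuousOn Ψ (sphere 0 1))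
    (hbij : BijOn Ψ (sphere 0 1) Γ) : ∃ M', HasBoundedTurningParam Ψ M' := by
  obtain ⟨δ, hδ, hδle⟩ := exists_pos_le_norm_sub_neg hc hbij.injOn
  have hbdd : IsBounded Γ :=
    hbij.image_eq ▸ ((isCompact_sphere 0 1).image_of_continuousOn hc).isBounded
  refine ⟨max 1 (M * (1 + diam Γ / δ)), le_max_left _ _, fun y₁ y₂ y hπ hy => ?_⟩
  have hmem : ∀ y : ℝ, Ψ (exp (y * I)) ∈ Γ := fun y => hbij.mapsTo (exp_mul_I_mem_sphere y)
  obtain ⟨J, hJ, hJ₁, hJ₂, hdiam⟩ := hM _ (hmem y₁) _ (hmem y₂)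
  have hd : 0 ≤ M * dist (Ψ (exp (y₁ * I))) (Ψ (exp (y₂ * I))) :=
    dist_nonneg.trans (hdiam _ hJ₁ _ hJ₁)
  simp only [← dist_eq_norm]
  suffices hle : dist (Ψ (exp (y * I))) (Ψ (exp (y₁ * I))) ≤
      M * (1 + diam Γ / δ) * dist (Ψ (exp (y₁ * I))) (Ψ (exp (y₂ * I))) from
    hle.trans (mul_le_mul_of_nonneg_right (le_max_right _ _) dist_nonneg)
  have hratio : 0 ≤ diam Γ / δ := div_nonneg diam_nonneg hδ.le
  rcases exp_mem_or_neg_exp_mem_of_isPreconnected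
    (isPreconnected_sphere_inter_preimage hc hbij hJ.2.2 hJ.1) inter_subset_left hπ hy
    ⟨exp_mul_I_mem_sphere y₁, hJ₁⟩ ⟨exp_mul_I_mem_sphere y₂, hJ₂⟩ with hyJ | hnegJ
  · have hle := hdiam _ hyJ.2 _ hJ₁
    nlinarith
  · have hδd := (hδle _ (exp_mul_I_mem_sphere y₂)).trans
      ((dist_eq_norm _ _).symm.trans_le (hdiam _ hJ₂ _ hnegJ.2))
    calc dist (Ψ (exp (y * I))) (Ψ (exp (y₁ * I))) ≤ diam Γ :=
          dist_le_diam_of_mem hbdd (hmem y) (hmem y₁)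
      _ = δ * (diam Γ / δ) := by field_simp
      _ ≤ M * dist (Ψ (exp (y₁ * I))) (Ψ (exp (y₂ * I))) * (diam Γ / δ) := by gcongr
      _ ≤ M * (1 + diam Γ / δ) * dist (Ψ (exp (y₁ * I))) (Ψ (exp (y₂ * I))) := by linarith

/-! ### The complement of a Jordan curve -/

lemma IsJordanCurve.isCompact {Γ : Set ℂ} (h : IsJordanCurve Γ) : IsCompact Γ := by
  obtain ⟨γ, hγ, -, rfl⟩ := h
  exact (isCompact_sphere 0 1).image_of_continuousOn hγ

lemma IsJordanCurve.surjOn {Γ : Set ℂ} (hΓ : IsJordanCurve Γ) {Ψ : ℂ → ℂ}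
    (hc : ContinuousOn Ψ (sphere 0 1)) (hinj : InjOn Ψ (sphere 0 1))
    (hmaps : MapsTo Ψ (sphere 0 1) Γ) : SurjOn Ψ (sphere 0 1) Γ := by
  obtain ⟨γ, hγ, hγinj, rfl⟩ := hΓ
  have hbij : BijOn γ (sphere 0 1) (γ '' sphere 0 1) := hγinj.bijOn_image
  have hsurj := surjOn_sphere_of_injOn
    ((continuousOn_invFunOn_of_isCompact (isCompact_sphere 0 1) hγ hbij).comp hc hmaps)
    (hbij.invOn_invFunOn.2.injOn.comp hinj hmaps)
    (hbij.surjOn.mapsTo_invFunOn.comp hmaps)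
  rintro _ ⟨x, hx, rfl⟩
  obtain ⟨t, ht, rfl⟩ := hsurj hx
  exact ⟨t, ht, (hbij.invOn_invFunOn.2 (hmaps ht)).symm⟩

section UnboundedComponent

variable {Γ : Set ℂ}

lemma connectedComponentIn_subset_unboundedComponent {z : ℂ} (hz : z ∈ unboundedComponent Γ) :
    connectedComponentIn Γᶜ z ⊆ unboundedComponent Γ :=
  fun w hw => ⟨connectedComponentIn_subset _ _ hw, by
    rw [← connectedComponentIn_eq hw]
    exact hz.2⟩

lemma isOpen_unboundedComponent (hΓ : IsClosed Γ) : IsOpen (unboundedComponent Γ) :=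
  isOpen_iff_mem_nhds.2 fun _ hz => mem_of_superset
    (hΓ.isOpen_compl.connectedComponentIn.mem_nhds (mem_connectedComponentIn hz.1))
    (connectedComponentIn_subset_unboundedComponent hz)

lemma closure_unboundedComponent_subset (hΓ : IsClosed Γ) :
    closure (unboundedComponent Γ) ⊆ unboundedComponent Γ ∪ Γ := by
  refine fun z hz => or_iff_not_imp_right.2 fun hzΓ => ?_
  obtain ⟨w, hw, hwΩ⟩ := mem_closure_iff.1 hz _ hΓ.isOpen_compl.connectedComponentIn
    (mem_connectedComponentIn hzΓ)
  refine ⟨hzΓ, ?_⟩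
  rw [connectedComponentIn_eq hw]
  exact hwΩ.2

lemma IsExtConformalClosure.bijOn_extInv_sphere {Φ : ℂ → ℂ} (hΓ : IsJordanCurve Γ)
    (h : IsExtConformalClosure (unboundedComponent Γ) Φ) :
    BijOn (extInv (unboundedComponent Γ) Φ) (sphere 0 1) Γ := by
  have hle : sphere (0 : ℂ) 1 ⊆ {t : ℂ | 1 ≤ ‖t‖} := fun t ht =>
    (mem_sphere_zero_iff_norm.1 ht).ge
  have hinj : InjOn (extInv (unboundedComponent Γ) Φ) (sphere 0 1) :=
    h.invOn_extInv.2.injOn.mono hle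
  have hmaps : MapsTo (extInv (unboundedComponent Γ) Φ) (sphere 0 1) Γ := fun t ht => by
    refine (closure_unboundedComponent_subset hΓ.isCompact.isClosed
      (h.mapsTo_extInv (hle ht))).resolve_left fun hΩ => ?_
    have hlt : Φ (extInv (unboundedComponent Γ) Φ t) ∈ extDisk := h.1.2.1.mapsTo hΩ
    rw [h.invOn_extInv.2 (hle ht), extDisk, mem_ofPred_eq] at hlt
    exact hlt.ne' (mem_sphere_zero_iff_norm.1 ht)
  exact ⟨hmaps, hinj, hΓ.surjOn (h.continuousOn_extInv.mono hle) hinj hmaps⟩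

end UnboundedComponent

theorem conformal_distortion_power_general {Γ : Set ℂ} {M : ℝ} (hΓ : IsJordanCurve Γ)
    (hM : HasBoundedTurning Γ M) {Φ : ℂ → ℂ}
    (hΦ : IsExtConformalClosure (unboundedComponent Γ) Φ) :
    ∃ α : ℝ, 1 ≤ α ∧ ∀ c > (0 : ℝ), ∃ C > (0 : ℝ), ∀ z₁ ∈ closure (unboundedComponent Γ),
      ∀ z₂ ∈ closure (unboundedComponent Γ), ∀ z₃ ∈ closure (unboundedComponent Γ), z₁ ≠ z₂ →
      dist z₁ z₂ ≤ c * dist z₁ z₃ →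
      (dist (Φ z₁) (Φ z₃) / dist (Φ z₁) (Φ z₂)) ^ (1 / α) ≤ C * (dist z₁ z₃ / dist z₁ z₂) ∧
        dist z₁ z₃ / dist z₁ z₂ ≤ C * (dist (Φ z₁) (Φ z₃) / dist (Φ z₁) (Φ z₂)) ^ α := by
  have hΨ : IsExtParam (extInv (unboundedComponent Γ) Φ) :=
    hΦ.isExtParam_extInv (isOpen_unboundedComponent hΓ.isCompact.isClosed)
  obtain ⟨M', hM'⟩ := hM.exists_hasBoundedTurningParam
    (hΨ.continuousOn.mono fun t ht => (mem_sphere_zero_iff_norm.1 ht).ge)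
    (hΦ.bijOn_extInv_sphere hΓ)
  obtain ⟨H, hH, hqs⟩ := hΨ.exists_weakQuasisymmOn hM' three_pos
  exact hqs.exists_rpow_distortion hH (meetsCircles_setOf_le_norm one_pos)
    hΦ.meetsCircles_closure hΦ.2.2.mapsTo hΦ.invOn_extInv

/-- Lemma 3.1 (ii): there is `α = α(Γ) ≥ 1` such that for every `c > 0`
there is `C = C(Γ,c) > 0` with: for `z₁,z₂,z₃` in the closure of `Ω`, `z₁ ≠ z₂`,
`t_j = Φ(z_j)`, if `|z₁-z₂| ≤ c|z₁-z₃|` then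
`(|t₁-t₃|/|t₁-t₂|)^{1/α} ≤ C |z₁-z₃|/|z₁-z₂|` and
`|z₁-z₃|/|z₁-z₂| ≤ C (|t₁-t₃|/|t₁-t₂|)^{α}`. -/
theorem conformal_distortion_power
    (Γ : Set ℂ) (Λ : ℝ) (hΓJ : IsJordanCurve Γ) (hΓq : IsQuasismooth Γ Λ)
    (Φ : ℂ → ℂ) (hΦ : IsExtConformalClosure (unboundedComponent Γ) Φ) :
    ∃ α : ℝ, 1 ≤ α ∧ ∀ c > (0:ℝ), ∃ C > (0:ℝ), ∀ z₁ z₂ z₃ : ℂ,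
      z₁ ∈ closure (unboundedComponent Γ) → z₂ ∈ closure (unboundedComponent Γ) →
      z₃ ∈ closure (unboundedComponent Γ) → z₁ ≠ z₂ →
      dist z₁ z₂ ≤ c * dist z₁ z₃ →
      (dist (Φ z₁) (Φ z₃) / dist (Φ z₁) (Φ z₂)) ^ (1/α) ≤
          C * (dist z₁ z₃ / dist z₁ z₂) ∧
        dist z₁ z₃ / dist z₁ z₂ ≤
          C * (dist (Φ z₁) (Φ z₃) / dist (Φ z₁) (Φ z₂)) ^ α := by
  obtain ⟨α, hα, hpower⟩ := conformal_distortion_power_general hΓJ hΓq.hasBoundedTurning hΦ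
  exact ⟨α, hα, fun c hc => let ⟨C, hC, hle⟩ := hpower c hc
    ⟨C, hC, fun z₁ z₂ z₃ h₁ h₂ h₃ => hle z₁ h₁ z₂ h₂ z₃ h₃⟩⟩
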